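/- Let F ∈ R^{l×m} with l < m and rank r, and suppose d_r(F) is associated to (z_1 − f) h, where f ∈ K[z_2, …, z_n] and h ∈ K[z_j] for some fixed j ∈ {2, …, n}. Then F is equivalent to its Smith form if and only if J_k(F) = R for every k = 1, …, r. -/

import Mathlib

open MvPolynomial Matrix

section Defs

variable {A : Type*} [CommRing A]

/-- The set of all `k × k` minors of a matrix. -/
def minorsSet {l m : ℕ} (F : Matrix (Fin l) (Fin m) A) (k : ℕ) : Set A :=
  { p | ∃ (r : Fin k ↪ Fin l) (c : Fin k ↪ Fin m), p = (F.submatrix ⇑r ⇑c).det }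

/-- `d` is a greatest common divisor of the `k × k` minors of `F`. -/
def IsGcdMinors {l m : ℕ} (F : Matrix (Fin l) (Fin m) A) (k : ℕ) (d : A) : Prop :=
  (∀ p ∈ minorsSet F k, d ∣ p) ∧ ∀ e : A, (∀ p ∈ minorsSet F k, e ∣ p) → e ∣ d

/-- The ideal generated by the `k × k` reduced minors of `F`, relative to a gcd `d`
of the `k × k` minors (the reduced minors are the `v` with `d * v` a minor). -/
def reducedIdeal {l m : ℕ} (F : Matrix (Fin l) (Fin m) A) (k : ℕ) (d : A) : Ideal A :=
  Ideal.span { v : A | d * v ∈ minorsSet F k }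

/-- `J_k(F) = R`: the `k × k` reduced minors of `F` generate the unit ideal. -/
def JkUnit {l m : ℕ} (F : Matrix (Fin l) (Fin m) A) (k : ℕ) : Prop :=
  ∃ d : A, IsGcdMinors F k d ∧ reducedIdeal F k d = ⊤

/-- `F` has rank `r`: some `r × r` minor is nonzero and all `(r+1) × (r+1)` minors vanish. -/
def HasRank {l m : ℕ} (F : Matrix (Fin l) (Fin m) A) (r : ℕ) : Prop :=
  (∃ p ∈ minorsSet F r, p ≠ 0) ∧ ∀ p ∈ minorsSet F (r + 1), p = 0

/-- Equivalence of matrices: `F₁ = U * F₂ * V` for unimodular `U`, `V`. -/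
def MatEquiv {l m : ℕ} (F₁ F₂ : Matrix (Fin l) (Fin m) A) : Prop :=
  ∃ (U : Matrix (Fin l) (Fin l) A) (V : Matrix (Fin m) (Fin m) A),
    IsUnit U.det ∧ IsUnit V.det ∧ F₁ = U * F₂ * V

/-- The rectangular diagonal matrix with diagonal entries `Φ`. -/
def smithDiag {l m : ℕ} (Φ : Fin l → A) : Matrix (Fin l) (Fin m) A :=
  Matrix.of fun i j => if (i : ℕ) = (j : ℕ) then Φ i else 0

/-- `F` (of rank `r`) is equivalent to its Smith form: there are diagonal entries `Φ` such that
for each `i ≤ r` the product `Φ_1 ⋯ Φ_i` is a gcd of the `i × i` minors of `F`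
(i.e. `Φ_i = d_i(F)/d_{i-1}(F)`), `Φ_i = 0` for `i > r`, and `F` is equivalent to
the diagonal matrix with entries `Φ`. -/
def SmithEquivAt {l m : ℕ} (F : Matrix (Fin l) (Fin m) A) (r : ℕ) : Prop :=
  ∃ Φ : Fin l → A,
    (∀ i : Fin l, (i : ℕ) < r →
      IsGcdMinors F ((i : ℕ) + 1) (∏ j ∈ Finset.Iic i, Φ j)) ∧
    (∀ i : Fin l, r ≤ (i : ℕ) → Φ i = 0) ∧
    MatEquiv F (smithDiag Φ)

/-- `F` is equivalent to its Smith form. -/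
def EquivToSmith {l m : ℕ} (F : Matrix (Fin l) (Fin m) A) : Prop :=
  ∃ r : ℕ, HasRank F r ∧ SmithEquivAt F r

end Defs

/-!
Equivalent matrices have the same determinantal ideals, and for a Smith form these are principal;
conversely `J_k(F) = R` says that the `k`-th determinantal ideal of `F` is generated by `d_k(F)`.
Dividing by `d_1(F)` and splitting off a unit entry reduces the size of `F`, so it suffices to find
a matrix equivalent to `F` with a unit entry when `d_1(F) = 1`. Substituting `z_1 + f` for `z_1`, we
may work over `A[X]`, where `A = K[t][σ]` and each nonzero `d_k(F)` divides `X h(t)`.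

If no `d_k(F)` involves `X`, then all determinantal ideals are generated by elements of the
principal ideal domain `K[t]`, and `F` has a Smith form over `K[t]` by induction on the number of
variables. Indeed, inverting the monic polynomials in the last variable `x` turns `F` into a matrix
over a ring containing `K(x)[t][σ]`, with one variable less, so there it is equivalent to its Smith
form. As in Horrocks' theorem this descends to `F` when the coefficient ring is local, by
factorizing the automorphisms of a Smith form between the open part and the part at infinity. Then
`F` is locally, hence by Quillen patching globally, equivalent to `F` at `x = 0`.

Otherwise `X` divides `d_{s+1}(F)` for exactly one `s` for which this is nonzero: the next
determinantal ideal lies in `(X²)`, so it vanishes. The Smith form of `F` at `X = 0` has rank at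
most `s`, whence `F` is equivalent to `G T` with `T = diag(1, …, 1, X, …, X)` and all determinantal
ideals of `G` generated by elements of `K[t]`. The previous case gives `G` a Smith form over `K[t]`,
which makes `G T` equivalent to `G(0) T`, and this has a unit in its corner.
-/

section Basics

variable {A B : Type*} [CommRing A] [CommRing B] {l m p : ℕ}

theorem isUnit_det_map (f : A →+* B) {U : Matrix (Fin l) (Fin l) A} (hU : IsUnit U.det) :
    IsUnit (U.map f).det := by
  simpa only [RingHom.map_det, RingHom.mapMatrix_apply] using hU.map f

theorem map_inv_of_isUnit_det (f : A →+* B) {U : Matrix (Fin l) (Fin l) A} (hU : IsUnit U.det) :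
    U⁻¹.map f = (U.map f)⁻¹ := by
  refine (inv_eq_left_inv ?_).symm
  rw [← Matrix.map_mul, nonsing_inv_mul _ hU, Matrix.map_one _ (map_zero f) (map_one f)]

namespace MatEquiv

variable {F G H : Matrix (Fin l) (Fin m) A}

theorem refl (F : Matrix (Fin l) (Fin m) A) : MatEquiv F F :=
  ⟨1, 1, by simp, by simp, by simp⟩

theorem of_mul {U : Matrix (Fin l) (Fin l) A} {V : Matrix (Fin m) (Fin m) A} (hU : IsUnit U.det)
    (hV : IsUnit V.det) : MatEquiv (U * F * V) F :=
  ⟨U, V, hU, hV, rfl⟩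

theorem symm (h : MatEquiv F G) : MatEquiv G F := by
  obtain ⟨U, V, hU, hV, rfl⟩ := h
  refine ⟨U⁻¹, V⁻¹, isUnit_nonsing_inv_det U hU, isUnit_nonsing_inv_det V hV, ?_⟩
  rw [Matrix.mul_assoc U, nonsing_inv_mul_cancel_left U _ hU, mul_nonsing_inv_cancel_right V _ hV]

theorem trans (h : MatEquiv F G) (h' : MatEquiv G H) : MatEquiv F H := by
  obtain ⟨U, V, hU, hV, rfl⟩ := h
  obtain ⟨U', V', hU', hV', rfl⟩ := h'
  refine ⟨U * U', V' * V, ?_, ?_, by simp only [Matrix.mul_assoc]⟩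
  · simpa only [det_mul] using hU.mul hU'
  · simpa only [det_mul] using hV'.mul hV

theorem map (f : A →+* B) (h : MatEquiv F G) : MatEquiv (F.map f) (G.map f) := by
  obtain ⟨U, V, hU, hV, rfl⟩ := h
  exact ⟨U.map f, V.map f, isUnit_det_map f hU, isUnit_det_map f hV, by simp only [Matrix.map_mul]⟩

theorem smul (c : A) (h : MatEquiv F G) : MatEquiv (c • F) (c • G) := by
  obtain ⟨U, V, hU, hV, rfl⟩ := h
  exact ⟨U, V, hU, hV, by simp⟩

end MatEquiv

/-- The `k`-th determinantal ideal of `F`, generated by its `k × k` minors. -/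
def detIdeal (F : Matrix (Fin l) (Fin m) A) (k : ℕ) : Ideal A :=
  Ideal.span (minorsSet F k)

theorem detIdeal_le_iff (F : Matrix (Fin l) (Fin m) A) {k : ℕ} (I : Ideal A) :
    detIdeal F k ≤ I ↔
      ∀ (r : Fin k ↪ Fin l) (c : Fin k ↪ Fin m), (F.submatrix r c).det ∈ I := by
  rw [detIdeal, Ideal.span_le]
  exact ⟨fun h r c => h ⟨r, c, rfl⟩, by rintro h _ ⟨r, c, rfl⟩; exact h r c⟩

theorem det_submatrix_mem_detIdeal (F : Matrix (Fin l) (Fin m) A) {k : ℕ} (r : Fin k → Fin l)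
    (c : Fin k → Fin m) : (F.submatrix r c).det ∈ detIdeal F k := by
  by_cases hr : Function.Injective r
  · by_cases hc : Function.Injective c
    · exact Ideal.subset_span ⟨⟨r, hr⟩, ⟨c, hc⟩, rfl⟩
    · obtain ⟨i, j, hij, hne⟩ := Function.not_injective_iff.1 hc
      rw [det_zero_of_column_eq hne fun t => by simp only [submatrix_apply, hij]]
      exact zero_mem _
  · obtain ⟨i, j, hij, hne⟩ := Function.not_injective_iff.1 hr
    rw [det_zero_of_row_eq hne (by ext t; simp only [submatrix_apply, hij])]
    exact zero_mem _

theorem apply_mem_detIdeal_one (F : Matrix (Fin l) (Fin m) A) (i : Fin l) (j : Fin m) :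
    F i j ∈ detIdeal F 1 := by
  simpa using det_submatrix_mem_detIdeal F (k := 1) (fun _ => i) (fun _ => j)

theorem detIdeal_one_le_iff (F : Matrix (Fin l) (Fin m) A) (I : Ideal A) :
    detIdeal F 1 ≤ I ↔ ∀ i j, F i j ∈ I :=
  ⟨fun h i j => h (apply_mem_detIdeal_one F i j),
    fun h => (detIdeal_le_iff F I).2 fun r c => by simpa using h (r 0) (c 0)⟩

@[simp]
theorem detIdeal_zero (F : Matrix (Fin l) (Fin m) A) : detIdeal F 0 = ⊤ := by
  rw [Ideal.eq_top_iff_one]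
  simpa using det_submatrix_mem_detIdeal F (k := 0) Fin.elim0 Fin.elim0

theorem detIdeal_eq_bot_of_lt (F : Matrix (Fin l) (Fin m) A) {k : ℕ} (hk : l < k) :
    detIdeal F k = ⊥ := by
  rw [eq_bot_iff, detIdeal_le_iff]
  intro r
  have : k ≤ l := by simpa using Fintype.card_le_of_embedding r
  omega

theorem detIdeal_transpose (F : Matrix (Fin l) (Fin m) A) (k : ℕ) :
    detIdeal Fᵀ k = detIdeal F k := by
  apply le_antisymm <;> rw [detIdeal_le_iff] <;> intro r c <;> rw [← det_transpose]
  · exact det_submatrix_mem_detIdeal F c r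
  · exact det_submatrix_mem_detIdeal Fᵀ c r

theorem detIdeal_mul_le_right (U : Matrix (Fin p) (Fin l) A) (F : Matrix (Fin l) (Fin m) A)
    (k : ℕ) : detIdeal (U * F) k ≤ detIdeal F k := by
  rw [detIdeal_le_iff]
  intro r c
  have rows_eq : (U * F).submatrix r c = fun i => ∑ x, U (r i) x • fun j => F x (c j) := by
    funext i j
    simp [Matrix.mul_apply]
  have expand : ((U * F).submatrix r c).det =
      ∑ f : Fin k → Fin l, (Matrix.of fun i j => U (r i) (f i) * F.submatrix f c i j).det := by
    rw [rows_eq]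
    exact (detRowAlternating (R := A) (n := Fin k)).toMultilinearMap.map_sum
      fun i x => U (r i) x • fun j => F x (c j)
  rw [expand]
  refine Ideal.sum_mem _ fun f _ => ?_
  rw [det_mul_column fun i => U (r i) (f i)]
  exact Ideal.mul_mem_left _ _ (det_submatrix_mem_detIdeal F f c)

theorem detIdeal_mul_le_left (F : Matrix (Fin l) (Fin m) A) (V : Matrix (Fin m) (Fin p) A)
    (k : ℕ) : detIdeal (F * V) k ≤ detIdeal F k := by
  rw [← detIdeal_transpose, ← detIdeal_transpose F, transpose_mul]
  exact detIdeal_mul_le_right _ _ _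

theorem MatEquiv.detIdeal_eq {F G : Matrix (Fin l) (Fin m) A} (h : MatEquiv F G) (k : ℕ) :
    detIdeal F k = detIdeal G k := by
  have detIdeal_le {F G : Matrix (Fin l) (Fin m) A} (h : MatEquiv F G) :
      detIdeal F k ≤ detIdeal G k := by
    obtain ⟨U, V, -, -, rfl⟩ := h
    exact (detIdeal_mul_le_left _ _ _).trans (detIdeal_mul_le_right _ _ _)
  exact le_antisymm (detIdeal_le h) (detIdeal_le h.symm)

theorem detIdeal_antitone (F : Matrix (Fin l) (Fin m) A) : Antitone (detIdeal F) := by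
  refine antitone_nat_of_succ_le fun k => (detIdeal_le_iff F _).2 fun r c => ?_
  rw [det_succ_row_zero]
  refine Ideal.sum_mem _ fun j _ => Ideal.mul_mem_left _ _ ?_
  rw [submatrix_submatrix]
  exact det_submatrix_mem_detIdeal F _ _

theorem detIdeal_smul (F : Matrix (Fin l) (Fin m) A) (c : A) (k : ℕ) :
    detIdeal (c • F) k = Ideal.span {c ^ k} * detIdeal F k := by
  rw [detIdeal, detIdeal, Ideal.span_mul_span', Set.singleton_mul]
  congr 1
  ext p
  simp [minorsSet, submatrix_smul, eq_comm]

theorem detIdeal_map (f : A →+* B) (F : Matrix (Fin l) (Fin m) A) (k : ℕ) :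
    detIdeal (F.map f) k = (detIdeal F k).map f := by
  rw [detIdeal, detIdeal, Ideal.map_span]
  congr 1
  ext p
  simp [minorsSet, RingHom.map_det, submatrix_map, eq_comm]

theorem detIdeal_map_eq_span (f : A →+* B) {F : Matrix (Fin l) (Fin m) A} {k : ℕ} {d : A}
    (h : detIdeal F k = Ideal.span {d}) : detIdeal (F.map f) k = Ideal.span {f d} := by
  rw [detIdeal_map, h, Ideal.map_span, Set.image_singleton]

@[simp]
theorem detIdeal_zero_matrix (k : ℕ) :
    detIdeal (0 : Matrix (Fin l) (Fin m) A) (k + 1) = ⊥ := by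
  rw [eq_bot_iff, detIdeal_le_iff]
  simp

end Basics

section Bordered

variable {A : Type*} {l m : ℕ}

/-- The matrix `F` enlarged by a corner entry `a`, a new first row `(a, b)` and a new first
column `(a, c)`. -/
def bordered (a : A) (b : Fin m → A) (c : Fin l → A) (F : Matrix (Fin l) (Fin m) A) :
    Matrix (Fin (l + 1)) (Fin (m + 1)) A :=
  Matrix.of (Fin.cons (Fin.cons a b) fun i => Fin.cons (c i) (F i))

variable (a : A) (b : Fin m → A) (c : Fin l → A) (F : Matrix (Fin l) (Fin m) A)

@[simp]
theorem bordered_zero_zero : bordered a b c F 0 0 = a := rfl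

@[simp]
theorem bordered_zero_succ (j : Fin m) : bordered a b c F 0 j.succ = b j := rfl

@[simp]
theorem bordered_succ_zero (i : Fin l) : bordered a b c F i.succ 0 = c i := rfl

@[simp]
theorem bordered_succ_succ (i : Fin l) (j : Fin m) : bordered a b c F i.succ j.succ = F i j := rfl

variable {a b c F}

theorem eq_bordered_iff {G : Matrix (Fin (l + 1)) (Fin (m + 1)) A} :
    G = bordered a b c F ↔ G 0 0 = a ∧ (∀ j, G 0 j.succ = b j) ∧ (∀ i, G i.succ 0 = c i) ∧
      ∀ i j, G i.succ j.succ = F i j := by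
  refine ⟨by rintro rfl; simp, fun ⟨h00, h0, h1, h⟩ => ?_⟩
  ext i j
  cases i using Fin.cases <;> cases j using Fin.cases <;> simp [h00, h0, h1, h]

end Bordered

section BorderedRing

variable {A B : Type*} [CommRing A] [CommRing B] {l m p : ℕ} {a : A} {b : Fin m → A}
  {c : Fin l → A} {F : Matrix (Fin l) (Fin m) A}

theorem bordered_mul_bordered {a' : A} {b' : Fin p → A} {c' : Fin m → A}
    {F' : Matrix (Fin m) (Fin p) A} :
    bordered a b c F * bordered a' b' c' F' =
      bordered (a * a' + b ⬝ᵥ c') (a • b' + b ᵥ* F') (fun i => c i * a' + (F *ᵥ c') i)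
        (vecMulVec c b' + F * F') := by
  simp [eq_bordered_iff, Matrix.mul_apply, Fin.sum_univ_succ, dotProduct, vecMul, mulVec,
    vecMulVec_apply]

theorem bordered_map (f : A →+* B) :
    (bordered a b c F).map f = bordered (f a) (f ∘ b) (f ∘ c) (F.map f) := by
  simp [eq_bordered_iff]

theorem smul_bordered (s : A) :
    s • bordered a b c F = bordered (s * a) (s • b) (s • c) (s • F) := by
  simp [eq_bordered_iff]

theorem det_bordered_zero_row {F : Matrix (Fin l) (Fin l) A} :
    (bordered a 0 c F).det = a * F.det := by
  have : (bordered a 0 c F).submatrix Fin.succ Fin.succ = F := rfl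
  simp [det_succ_row_zero, Fin.sum_univ_succ, this]

theorem det_bordered_zero_column {b : Fin l → A} {F : Matrix (Fin l) (Fin l) A} :
    (bordered a b 0 F).det = a * F.det := by
  have : (bordered a b 0 F).submatrix Fin.succ Fin.succ = F := rfl
  simp [det_succ_column_zero, Fin.sum_univ_succ, this]

theorem MatEquiv.bordered (d : A) {F G : Matrix (Fin l) (Fin m) A} (h : MatEquiv F G) :
    MatEquiv (bordered d 0 0 F) (bordered d 0 0 G) := by
  obtain ⟨U, V, hU, hV, rfl⟩ := h
  refine ⟨_root_.bordered 1 0 0 U, _root_.bordered 1 0 0 V, ?_, ?_, ?_⟩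
  · simpa only [det_bordered_zero_row, one_mul] using hU
  · simpa only [det_bordered_zero_row, one_mul] using hV
  · simp [bordered_mul_bordered, eq_bordered_iff, vecMulVec_apply]

theorem det_submatrix_bordered_one_mem {F : Matrix (Fin l) (Fin m) A} {k : ℕ}
    {r : Fin k → Fin (l + 1)} (hr : ∀ i, r i ≠ 0) (c : Fin k → Fin (m + 1)) :
    ((bordered 1 0 0 F).submatrix r c).det ∈ detIdeal F k := by
  choose r' hr' using fun i => Fin.exists_succ_eq.2 (hr i)
  obtain rfl : r = fun i => (r' i).succ := funext fun i => (hr' i).symm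
  by_cases hc : ∃ j, c j = 0
  · obtain ⟨j, hj⟩ := hc
    rw [det_eq_zero_of_column_eq_zero j fun i => by simp [hj]]
    exact zero_mem _
  · choose c' hc' using fun j => Fin.exists_succ_eq.2 (not_exists.1 hc j)
    obtain rfl : c = fun j => (c' j).succ := funext fun j => (hc' j).symm
    exact det_submatrix_mem_detIdeal F r' c'

theorem detIdeal_bordered_one (F : Matrix (Fin l) (Fin m) A) (k : ℕ) :
    detIdeal (bordered 1 0 0 F) (k + 1) = detIdeal F k := by
  apply le_antisymm
  · rw [detIdeal_le_iff]
    intro r c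
    obtain ⟨i₀, hi₀⟩ : ∃ i₀, ∀ i, i ≠ i₀ → r i ≠ 0 := by
      by_cases h : ∃ i₀, r i₀ = 0
      · obtain ⟨i₀, h₀⟩ := h
        exact ⟨i₀, fun i hi h₁ => hi (r.injective (h₁.trans h₀.symm))⟩
      · exact ⟨0, fun i _ => not_exists.1 h i⟩
    rw [det_succ_row _ i₀]
    refine Ideal.sum_mem _ fun j _ => Ideal.mul_mem_left _ _ ?_
    rw [submatrix_submatrix]
    exact det_submatrix_bordered_one_mem (fun i => hi₀ _ (Fin.succAbove_ne i₀ i)) _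
  · rw [detIdeal_le_iff]
    intro r c
    have minor_eq : (bordered 1 0 0 F).submatrix (Fin.cons 0 fun i => (r i).succ)
        (Fin.cons 0 fun j => (c j).succ) = bordered 1 0 0 (F.submatrix r c) := by
      simp [eq_bordered_iff]
    rw [← one_mul (F.submatrix r c).det, ← det_bordered_zero_row (c := 0), ← minor_eq]
    exact det_submatrix_mem_detIdeal _ _ _

theorem exists_matEquiv_bordered_one {G : Matrix (Fin (l + 1)) (Fin (m + 1)) A}
    (hG : IsUnit (G 0 0)) : ∃ G' : Matrix (Fin l) (Fin m) A, MatEquiv G (bordered 1 0 0 G') := by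
  obtain ⟨u, hu⟩ := hG
  let b : Fin m → A := fun j => ↑u⁻¹ * G 0 j.succ
  let c : Fin l → A := fun i => G i.succ 0
  refine ⟨G.submatrix Fin.succ Fin.succ - vecMulVec c b, bordered u 0 c 1, bordered 1 b 0 1,
    ?_, ?_, ?_⟩
  · simp [det_bordered_zero_row]
  · simp [det_bordered_zero_column]
  · simp [bordered_mul_bordered, eq_bordered_iff, vecMulVec_apply, ← hu, b, c]

end BorderedRing

section Elementary

variable {A B : Type*} [CommRing A] [CommRing B] {l m N : ℕ}

/-- The monoid of `(N + 1) × (N + 1)` matrices generated by the row and column operations used in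
the Euclidean algorithm. Unlike arbitrary invertible matrices, its elements lift along every
surjective ring homomorphism. -/
def elementarySubmonoid (A : Type*) [CommRing A] (N : ℕ) :
    Submonoid (Matrix (Fin (N + 1)) (Fin (N + 1)) A) :=
  Submonoid.closure {P | (∃ c, P = bordered 1 0 c 1) ∨ (∃ b, P = bordered 1 b 0 1) ∨
    ∃ i j, P = Matrix.swap A i j}

theorem bordered_column_mem_elementarySubmonoid (c : Fin N → A) :
    bordered 1 0 c 1 ∈ elementarySubmonoid A N :=
  Submonoid.subset_closure (.inl ⟨c, rfl⟩)

theorem bordered_row_mem_elementarySubmonoid (b : Fin N → A) :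
    bordered 1 b 0 1 ∈ elementarySubmonoid A N :=
  Submonoid.subset_closure (.inr (.inl ⟨b, rfl⟩))

theorem swap_mem_elementarySubmonoid (i j : Fin (N + 1)) :
    Matrix.swap A i j ∈ elementarySubmonoid A N :=
  Submonoid.subset_closure (.inr (.inr ⟨i, j, rfl⟩))

theorem isUnit_det_of_mem_elementarySubmonoid {P : Matrix (Fin (N + 1)) (Fin (N + 1)) A}
    (hP : P ∈ elementarySubmonoid A N) : IsUnit P.det := by
  induction hP using Submonoid.closure_induction with
  | mem P hP =>
    rcases hP with ⟨c, rfl⟩ | ⟨b, rfl⟩ | ⟨i, j, rfl⟩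
    · simp [det_bordered_zero_row]
    · simp [det_bordered_zero_column]
    · refine .of_mul_eq_one (Matrix.swap A i j).det ?_
      rw [← det_mul, swap_mul_self, det_one]
  | one => simp
  | mul P Q _ _ hP hQ => simpa only [det_mul] using hP.mul hQ

theorem exists_mem_elementarySubmonoid_map_eq {f : A →+* B} (hf : Function.Surjective f)
    {P : Matrix (Fin (N + 1)) (Fin (N + 1)) B} (hP : P ∈ elementarySubmonoid B N) :
    ∃ P' ∈ elementarySubmonoid A N, P'.map f = P := by
  induction hP using Submonoid.closure_induction with
  | mem P hP =>
    choose g hg using hf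
    rcases hP with ⟨c, rfl⟩ | ⟨b, rfl⟩ | ⟨i, j, rfl⟩
    · refine ⟨_, bordered_column_mem_elementarySubmonoid (g ∘ c), ?_⟩
      simp [bordered_map, eq_bordered_iff, hg]
    · refine ⟨_, bordered_row_mem_elementarySubmonoid (g ∘ b), ?_⟩
      simp [bordered_map, eq_bordered_iff, hg]
    · exact ⟨_, swap_mem_elementarySubmonoid i j, by simp⟩
  | one => exact ⟨1, one_mem _, by simp⟩
  | mul P Q _ _ hP hQ =>
    obtain ⟨P', hP', rfl⟩ := hP
    obtain ⟨Q', hQ', rfl⟩ := hQ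
    exact ⟨P' * Q', mul_mem hP' hQ', by simp⟩

/-- `G` is obtained from `F` by elementary row and column operations. -/
def ElemEquiv (F G : Matrix (Fin (l + 1)) (Fin (m + 1)) A) : Prop :=
  ∃ P ∈ elementarySubmonoid A l, ∃ Q ∈ elementarySubmonoid A m, P * F * Q = G

namespace ElemEquiv

variable {F G H : Matrix (Fin (l + 1)) (Fin (m + 1)) A}

theorem refl (F : Matrix (Fin (l + 1)) (Fin (m + 1)) A) : ElemEquiv F F :=
  ⟨1, one_mem _, 1, one_mem _, by simp⟩

theorem trans (h : ElemEquiv F G) (h' : ElemEquiv G H) : ElemEquiv F H := by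
  obtain ⟨P, hP, Q, hQ, rfl⟩ := h
  obtain ⟨P', hP', Q', hQ', rfl⟩ := h'
  exact ⟨P' * P, mul_mem hP' hP, Q * Q', mul_mem hQ hQ', by simp only [Matrix.mul_assoc]⟩

theorem mul_left {P : Matrix (Fin (l + 1)) (Fin (l + 1)) A} (hP : P ∈ elementarySubmonoid A l)
    (F : Matrix (Fin (l + 1)) (Fin (m + 1)) A) : ElemEquiv F (P * F) :=
  ⟨P, hP, 1, one_mem _, by simp⟩

theorem mul_right {Q : Matrix (Fin (m + 1)) (Fin (m + 1)) A} (hQ : Q ∈ elementarySubmonoid A m)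
    (F : Matrix (Fin (l + 1)) (Fin (m + 1)) A) : ElemEquiv F (F * Q) :=
  ⟨1, one_mem _, Q, hQ, by simp⟩

theorem matEquiv (h : ElemEquiv F G) : MatEquiv F G := by
  obtain ⟨P, hP, Q, hQ, rfl⟩ := h
  exact (MatEquiv.of_mul (isUnit_det_of_mem_elementarySubmonoid hP)
    (isUnit_det_of_mem_elementarySubmonoid hQ)).symm

end ElemEquiv

theorem ElemEquiv.exists_lift {f : A →+* B} (hf : Function.Surjective f)
    {F : Matrix (Fin (l + 1)) (Fin (m + 1)) A} {G : Matrix (Fin (l + 1)) (Fin (m + 1)) B}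
    (h : ElemEquiv (F.map f) G) : ∃ G', ElemEquiv F G' ∧ G'.map f = G := by
  obtain ⟨P, hP, Q, hQ, rfl⟩ := h
  obtain ⟨P', hP', rfl⟩ := exists_mem_elementarySubmonoid_map_eq hf hP
  obtain ⟨Q', hQ', rfl⟩ := exists_mem_elementarySubmonoid_map_eq hf hQ
  exact ⟨P' * F * Q', ⟨P', hP', Q', hQ', rfl⟩, by simp⟩

end Elementary

section Euclidean

variable {D : Type*} [EuclideanDomain D] {l m : ℕ}

/-- The corner entry of `F` is nonzero, and no matrix obtained from `F` by elementary operations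
has a nonzero entry of smaller Euclidean size. -/
def IsMinimalPivot (F : Matrix (Fin (l + 1)) (Fin (m + 1)) D) : Prop :=
  F 0 0 ≠ 0 ∧ ∀ G, ElemEquiv F G → ∀ i j, G i j ≠ 0 → ¬ EuclideanDomain.r (G i j) (F 0 0)

theorem exists_elemEquiv_isMinimalPivot {F : Matrix (Fin (l + 1)) (Fin (m + 1)) D} (hF : F ≠ 0) :
    ∃ G, ElemEquiv F G ∧ IsMinimalPivot G := by
  let S : Set D := {x | x ≠ 0 ∧ ∃ G, ElemEquiv F G ∧ ∃ i j, G i j = x}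
  have hS : S.Nonempty := by
    by_contra hS
    refine hF (Matrix.ext fun i j => by_contra fun hij => hS ?_)
    exact ⟨F i j, hij, F, .refl F, i, j, rfl⟩
  obtain ⟨_, ⟨hG0, G, hFG, i, j, rfl⟩, hmin⟩ := EuclideanDomain.r_wellFounded.has_min S hS
  let G' := Matrix.swap D 0 i * G * Matrix.swap D 0 j
  have hFG' : ElemEquiv F G' := (hFG.trans
    (.mul_left (swap_mem_elementarySubmonoid 0 i) G)).trans
      (.mul_right (swap_mem_elementarySubmonoid 0 j) _)
  have hcorner : G' 0 0 = G i j := by simp [G']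
  refine ⟨G', hFG', hcorner ▸ hG0, fun H hH a b hab => ?_⟩
  rw [hcorner]
  exact hmin _ ⟨hab, H, hFG'.trans hH, a, b, rfl⟩

namespace IsMinimalPivot

variable {F G : Matrix (Fin (l + 1)) (Fin (m + 1)) D}

theorem of_elemEquiv (hF : IsMinimalPivot F) (h : ElemEquiv F G) (h0 : G 0 0 = F 0 0) :
    IsMinimalPivot G :=
  ⟨h0 ▸ hF.1, fun H hH => h0 ▸ hF.2 H (h.trans hH)⟩

theorem dvd_column (hF : IsMinimalPivot F) (i : Fin l) : F 0 0 ∣ F i.succ 0 := by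
  by_contra hdvd
  let c : Fin l → D := Pi.single i (-(F i.succ 0 / F 0 0))
  let P : Matrix (Fin (l + 1)) (Fin (l + 1)) D := bordered 1 0 c 1
  have hmod : (P * F) i.succ 0 = F i.succ 0 % F 0 0 := by
    simp only [P, c, EuclideanDomain.mod_eq_sub_mul_div, Matrix.mul_apply, Fin.sum_univ_succ,
      bordered_succ_zero, bordered_succ_succ, Pi.single_eq_same, Matrix.one_apply, ite_mul,
      one_mul, zero_mul, Finset.sum_ite_eq, Finset.mem_univ, if_true]
    ring
  refine hF.2 _ (.mul_left (bordered_column_mem_elementarySubmonoid c) F) i.succ 0 ?_ ?_ <;>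
    rw [hmod]
  · rwa [Ne, EuclideanDomain.mod_eq_zero]
  · exact EuclideanDomain.mod_lt _ hF.1

theorem dvd_row (hF : IsMinimalPivot F) (j : Fin m) : F 0 0 ∣ F 0 j.succ := by
  by_contra hdvd
  let b : Fin m → D := Pi.single j (-(F 0 j.succ / F 0 0))
  let Q : Matrix (Fin (m + 1)) (Fin (m + 1)) D := bordered 1 b 0 1
  have hmod : (F * Q) 0 j.succ = F 0 j.succ % F 0 0 := by
    simp only [Q, b, EuclideanDomain.mod_eq_sub_mul_div, Matrix.mul_apply, Fin.sum_univ_succ,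
      bordered_zero_succ, bordered_succ_succ, Pi.single_eq_same, Matrix.one_apply, mul_ite,
      mul_one, mul_zero, Finset.sum_ite_eq', Finset.mem_univ, if_true]
    ring
  refine hF.2 _ (.mul_right (bordered_row_mem_elementarySubmonoid b) F) 0 j.succ ?_ ?_ <;>
    rw [hmod]
  · rwa [Ne, EuclideanDomain.mod_eq_zero]
  · exact EuclideanDomain.mod_lt _ hF.1

theorem exists_elemEquiv_bordered (hF : IsMinimalPivot F) :
    ∃ G, ElemEquiv F (bordered (F 0 0) 0 0 G) := by
  choose c hc using hF.dvd_column
  choose b hb using hF.dvd_row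
  let G : Matrix (Fin l) (Fin m) D := F.submatrix Fin.succ Fin.succ - F 0 0 • vecMulVec c b
  refine ⟨G, bordered 1 0 (-c) 1, bordered_column_mem_elementarySubmonoid _,
    bordered 1 (-b) 0 1, bordered_row_mem_elementarySubmonoid _, ?_⟩
  have hF_eq : F = bordered (F 0 0) (F 0 0 • b) (F 0 0 • c) (F.submatrix Fin.succ Fin.succ) := by
    simp [eq_bordered_iff, hb, hc]
  conv_lhs => rw [hF_eq]
  simp [bordered_mul_bordered, eq_bordered_iff, G, vecMulVec_apply, mul_comm (c _) (F 0 0),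
    neg_add_eq_sub]

theorem dvd_of_bordered {a : D} {F : Matrix (Fin l) (Fin m) D}
    (hF : IsMinimalPivot (bordered a 0 0 F)) (i : Fin l) (j : Fin m) : a ∣ F i j := by
  let P : Matrix (Fin (l + 1)) (Fin (l + 1)) D := bordered 1 (Pi.single i 1) 0 1
  have hP : P * bordered a 0 0 F = bordered a (F i) 0 F := by
    simp [P, bordered_mul_bordered, eq_bordered_iff, mulVec, dotProduct]
  have := (hF.of_elemEquiv (.mul_left (bordered_row_mem_elementarySubmonoid _) _)
    (by rw [hP]; rfl)).dvd_row j
  rwa [hP] at this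

end IsMinimalPivot

theorem exists_elemEquiv_bordered_detIdeal_one_le {F : Matrix (Fin (l + 1)) (Fin (m + 1)) D}
    (hF : F ≠ 0) : ∃ d G, ElemEquiv F (bordered d 0 0 G) ∧ detIdeal F 1 ≤ Ideal.span {d} := by
  obtain ⟨F', hF', hmin⟩ := exists_elemEquiv_isMinimalPivot hF
  obtain ⟨G, hG⟩ := hmin.exists_elemEquiv_bordered
  refine ⟨F' 0 0, G, hF'.trans hG, ?_⟩
  rw [(hF'.trans hG).matEquiv.detIdeal_eq, detIdeal_one_le_iff]
  intro i j
  rw [Ideal.mem_span_singleton]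
  have := (hmin.of_elemEquiv hG rfl).dvd_of_bordered
  cases i using Fin.cases <;> cases j using Fin.cases <;> simp [this]

theorem exists_isUnit_det_map_eq {B : Type*} [CommRing B] {q : B →+* D}
    (hq : Function.Surjective q) (hunit : ∀ d : D, IsUnit d → ∃ b : B, IsUnit b ∧ q b = d)
    {N : ℕ} {M : Matrix (Fin N) (Fin N) D} (hM : IsUnit M.det) :
    ∃ M' : Matrix (Fin N) (Fin N) B, IsUnit M'.det ∧ M'.map q = M := by
  induction N with
  | zero => exact ⟨1, by simp, by ext i; exact i.elim0⟩
  | succ N ih =>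
    have hM0 : M ≠ 0 := by
      rintro rfl
      simp [det_zero] at hM
    obtain ⟨d, G, ⟨P, hP, Q, hQ, hPMQ⟩, -⟩ := exists_elemEquiv_bordered_detIdeal_one_le hM0
    obtain ⟨P', hP', rfl⟩ := exists_mem_elementarySubmonoid_map_eq hq hP
    obtain ⟨Q', hQ', rfl⟩ := exists_mem_elementarySubmonoid_map_eq hq hQ
    have hP'det := isUnit_det_of_mem_elementarySubmonoid hP'
    have hQ'det := isUnit_det_of_mem_elementarySubmonoid hQ'
    have hdet : IsUnit (bordered d 0 0 G).det := by
      rw [← hPMQ, det_mul, det_mul]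
      exact ((isUnit_det_map q hP'det).mul hM).mul (isUnit_det_map q hQ'det)
    rw [det_bordered_zero_row, IsUnit.mul_iff] at hdet
    obtain ⟨d', hd', rfl⟩ := hunit d hdet.1
    obtain ⟨G', hG', rfl⟩ := ih hdet.2
    refine ⟨P'⁻¹ * bordered d' 0 0 G' * Q'⁻¹, ?_, ?_⟩
    · rw [det_mul, det_mul, det_bordered_zero_row]
      exact ((isUnit_nonsing_inv_det _ hP'det).mul (hd'.mul hG')).mul
        (isUnit_nonsing_inv_det _ hQ'det)
    · have hmap : (bordered d' 0 0 G').map q = P'.map q * M * Q'.map q := by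
        rw [hPMQ]
        simp [bordered_map]
      rw [Matrix.map_mul, Matrix.map_mul, map_inv_of_isUnit_det q hP'det,
        map_inv_of_isUnit_det q hQ'det, hmap, Matrix.mul_assoc (P'.map q),
        nonsing_inv_mul_cancel_left _ _ (isUnit_det_map q hP'det),
        mul_nonsing_inv_cancel_right _ _ (isUnit_det_map q hQ'det)]

end Euclidean

section SmithForm

/-- The product `Φ 0 * ⋯ * Φ (k - 1)` of the first `k` entries of `Φ`. -/
def initProd {A : Type*} [CommMonoid A] {l : ℕ} (Φ : Fin l → A) (k : ℕ) : A :=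
  ∏ i ∈ {i : Fin l | (i : ℕ) < k}, Φ i

variable {A B : Type*} [CommRing A] [CommRing B] {l m : ℕ}

@[simp]
theorem initProd_zero (Φ : Fin l → A) : initProd Φ 0 = 1 := by
  simp [initProd]

theorem initProd_cons (a : A) (Φ : Fin l → A) (k : ℕ) :
    initProd (Fin.cons a Φ : Fin (l + 1) → A) (k + 1) = a * initProd Φ k := by
  simp [initProd, Finset.prod_filter, Fin.prod_univ_succ]

theorem initProd_succ (Φ : Fin l → A) (i : Fin l) :
    initProd Φ (i + 1) = initProd Φ i * Φ i := by
  have : ({j | (j : ℕ) < i + 1} : Finset (Fin l)) =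
      insert i ({j | (j : ℕ) < i} : Finset (Fin l)) := by
    ext j
    simp only [Finset.mem_filter_univ, Finset.mem_insert, Fin.ext_iff]
    lia
  rw [initProd, this, Finset.prod_insert (by simp), mul_comm, initProd]

theorem initProd_smul (c : A) (Φ : Fin l → A) {k : ℕ} (hk : k ≤ l) :
    initProd (c • Φ) k = c ^ k * initProd Φ k := by
  simp [initProd, Finset.prod_mul_distrib, Fin.card_filter_val_lt, hk]

theorem map_initProd (f : A →+* B) (Φ : Fin l → A) (k : ℕ) :
    f (initProd Φ k) = initProd (fun i => f (Φ i)) k :=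
  map_prod f _ _

theorem initProd_eq_zero_iff [IsDomain A] {Φ : Fin l → A} {k : ℕ} :
    initProd Φ k = 0 ↔ ∃ i : Fin l, (i : ℕ) < k ∧ Φ i = 0 := by
  simp [initProd, Finset.prod_eq_zero_iff]

/-- The divisibility condition `Φ 0 ∣ Φ 1 ∣ ⋯` on the invariant factors of a matrix. -/
def DvdChain (Φ : Fin l → A) : Prop :=
  ∀ i j, i ≤ j → Φ i ∣ Φ j

theorem DvdChain.map (f : A →+* B) {Φ : Fin l → A} (h : DvdChain Φ) :
    DvdChain fun i => f (Φ i) :=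
  fun i j hij => map_dvd f (h i j hij)

theorem DvdChain.cons_smul {Φ : Fin l → A} (h : DvdChain Φ) (d : A) :
    DvdChain (Fin.cons d (d • Φ) : Fin (l + 1) → A) := by
  intro i j hij
  cases i using Fin.cases with
  | zero => cases j using Fin.cases <;> simp
  | succ i =>
    cases j using Fin.cases with
    | zero => simp at hij
    | succ j => simpa using mul_dvd_mul_left d (h i j (Fin.succ_le_succ_iff.1 hij))

theorem DvdChain.associated_of_span_initProd_eq [IsDomain A] {Φ Ψ : Fin l → A} (hΦ : DvdChain Φ)
    (hΨ : DvdChain Ψ)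
    (h : ∀ k ≤ l, Ideal.span {initProd Φ k} = Ideal.span {initProd Ψ k}) (i : Fin l) :
    Associated (Φ i) (Ψ i) := by
  have eq_zero {Φ : Fin l → A} (hΦ : DvdChain Φ) (h0 : initProd Φ i = 0) : Φ i = 0 := by
    obtain ⟨j, hj, hj0⟩ := initProd_eq_zero_iff.1 h0
    exact zero_dvd_iff.1 (hj0 ▸ hΦ j i (Fin.le_def.2 hj.le))
  have hi := Ideal.span_singleton_eq_span_singleton.1 (h i i.2.le)
  have hi' := Ideal.span_singleton_eq_span_singleton.1 (h (i + 1) i.2)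
  by_cases h0 : initProd Φ i = 0
  · rw [eq_zero hΦ h0, eq_zero hΨ ((associated_zero_iff_eq_zero _).1 (h0 ▸ hi.symm))]
  · rw [initProd_succ, initProd_succ] at hi'
    exact hi'.of_mul_left hi h0

theorem smithDiag_cons (a : A) (Φ : Fin l → A) :
    (smithDiag (Fin.cons a Φ : Fin (l + 1) → A) : Matrix _ (Fin (m + 1)) A) =
      bordered a 0 0 (smithDiag Φ) := by
  simp [eq_bordered_iff, smithDiag]

theorem smul_smithDiag (a : A) (Φ : Fin l → A) :
    a • (smithDiag Φ : Matrix _ (Fin m) A) = smithDiag (a • Φ) := by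
  ext i j
  simp [smithDiag]

theorem smithDiag_map (f : A →+* B) (Φ : Fin l → A) :
    (smithDiag Φ : Matrix _ (Fin m) A).map f = smithDiag fun i => f (Φ i) := by
  ext i j
  simp [smithDiag, apply_ite f]

theorem smithDiag_zero : (smithDiag 0 : Matrix (Fin l) (Fin m) A) = 0 := by
  ext i j
  simp [smithDiag]

theorem smithDiag_eq_diagonal (Φ : Fin l → A) :
    (smithDiag Φ : Matrix (Fin l) (Fin l) A) = diagonal Φ := by
  ext i j
  simp [smithDiag, diagonal, Fin.ext_iff]

theorem matEquiv_smithDiag_of_associated {Φ Ψ : Fin l → A} (h : ∀ i, Associated (Φ i) (Ψ i)) :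
    MatEquiv (smithDiag Φ : Matrix _ (Fin m) A) (smithDiag Ψ) := by
  choose u hu using fun i => (h i).symm
  refine ⟨diagonal fun i => (u i : A), 1, ?_, by simp, ?_⟩
  · rw [det_diagonal]
    exact ⟨∏ i, u i, by simp⟩
  · ext i j
    simp [diagonal_mul, smithDiag, ← hu, mul_comm]

/-- `Φ` is a sequence of invariant factors of `F`, whose partial products generate the
determinantal ideals of `F`, and `F` is equivalent to the diagonal matrix of `Φ`. -/
structure IsSmithForm (F : Matrix (Fin l) (Fin m) A) (Φ : Fin l → A) : Prop where
  dvdChain : DvdChain Φ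
  matEquiv : MatEquiv F (smithDiag Φ)
  detIdeal_eq : ∀ k ≤ l, detIdeal F k = Ideal.span {initProd Φ k}

namespace IsSmithForm

theorem zero : IsSmithForm (0 : Matrix (Fin l) (Fin m) A) 0 where
  dvdChain _ _ _ := dvd_rfl
  matEquiv := smithDiag_zero (A := A) (l := l) (m := m) ▸ .refl _
  detIdeal_eq
    | 0, _ => by simp
    | k + 1, hk => by
      have : initProd (0 : Fin l → A) (k + 1) = 0 :=
        Finset.prod_eq_zero (i := ⟨0, by omega⟩) (by simp) rfl
      simp [this]

theorem smul_of_matEquiv_bordered {F : Matrix (Fin (l + 1)) (Fin (m + 1)) A}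
    {G : Matrix (Fin l) (Fin m) A} {Φ : Fin l → A} (h : IsSmithForm G Φ)
    (hF : MatEquiv F (bordered 1 0 0 G)) (d : A) :
    IsSmithForm (d • F) (Fin.cons d (d • Φ) : Fin (l + 1) → A) where
  dvdChain := h.dvdChain.cons_smul d
  matEquiv := by
    have := (hF.trans (h.matEquiv.bordered 1)).smul d
    rwa [smul_bordered, mul_one, smul_zero, smul_zero, smul_smithDiag, ← smithDiag_cons] at this
  detIdeal_eq
    | 0, _ => by simp
    | k + 1, hk => by
      rw [detIdeal_smul, hF.detIdeal_eq, detIdeal_bordered_one, h.detIdeal_eq k (by omega),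
        initProd_cons, initProd_smul _ _ (by omega), Ideal.span_singleton_mul_span_singleton,
        pow_succ', mul_assoc]

end IsSmithForm

/-- All determinantal ideals of `F` are principal, with generators that vanish or divide `D₀`. -/
def HasPrincipalMinors (D₀ : A) (F : Matrix (Fin l) (Fin m) A) : Prop :=
  ∀ k, ∃ δ, detIdeal F k = Ideal.span {δ} ∧ (δ = 0 ∨ δ ∣ D₀)

theorem HasPrincipalMinors.exists_eq_smul [IsDomain A] {D₀ : A} {F : Matrix (Fin l) (Fin m) A}
    (hF : HasPrincipalMinors D₀ F) (hF0 : F ≠ 0) :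
    ∃ (d : A) (G : Matrix (Fin l) (Fin m) A),
      F = d • G ∧ detIdeal G 1 = ⊤ ∧ HasPrincipalMinors D₀ G := by
  choose δ hδ hδD using hF
  have dvd : ∀ i j, δ 1 ∣ F i j := fun i j =>
    Ideal.mem_span_singleton.1 ((detIdeal_one_le_iff F _).1 (hδ 1).le i j)
  have hδ1 : δ 1 ≠ 0 := fun h => hF0 (Matrix.ext fun i j => zero_dvd_iff.1 (h ▸ dvd i j))
  choose G' hG' using dvd
  obtain ⟨G, rfl⟩ : ∃ G : Matrix (Fin l) (Fin m) A, F = δ 1 • G :=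
    ⟨Matrix.of G', by ext i j; simp [hG']⟩
  have principal : ∀ k, ∃ ε, detIdeal G k = Ideal.span {ε} ∧ δ 1 ^ k * ε = δ k := by
    intro k
    have hk := hδ k
    rw [detIdeal_smul] at hk
    obtain ⟨ε, -, hε⟩ := Ideal.mem_span_singleton_mul.1 (hk ▸ Ideal.mem_span_singleton_self (δ k))
    rw [← hε, ← Ideal.span_singleton_mul_span_singleton] at hk
    exact ⟨ε, (Ideal.span_singleton_mul_right_inj (pow_ne_zero k hδ1)).1 hk, hε⟩
  refine ⟨δ 1, G, rfl, ?_, fun k => ?_⟩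
  · obtain ⟨ε, hGε, hε⟩ := principal 1
    rw [pow_one] at hε
    rw [hGε, (mul_eq_left₀ hδ1).1 hε, Ideal.span_singleton_one]
  · obtain ⟨ε, hGε, hε⟩ := principal k
    refine ⟨ε, hGε, (hδD k).imp (fun h => ?_) (Dvd.intro_left _ hε).trans⟩
    exact (mul_eq_zero.1 (hε.trans h)).resolve_left (pow_ne_zero k hδ1)

theorem HasPrincipalMinors.exists_isSmithForm [IsDomain A] {D₀ : A}
    (split : ∀ (l m : ℕ) (F : Matrix (Fin (l + 1)) (Fin (m + 1)) A), detIdeal F 1 = ⊤ →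
      HasPrincipalMinors D₀ F → ∃ G, MatEquiv F (bordered 1 0 0 G))
    {F : Matrix (Fin l) (Fin m) A} (hF : HasPrincipalMinors D₀ F) : ∃ Φ, IsSmithForm F Φ := by
  induction l generalizing m with
  | zero =>
    obtain rfl : F = 0 := by ext i; exact i.elim0
    exact ⟨0, .zero⟩
  | succ l ih =>
    by_cases hF0 : F = 0
    · exact ⟨0, hF0 ▸ .zero⟩
    obtain ⟨d, G, rfl, hG1, hG⟩ := hF.exists_eq_smul hF0
    cases m with
    | zero => exact (hF0 (by ext i j; exact j.elim0)).elim
    | succ m =>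
      obtain ⟨H, hGH⟩ := split l m G hG1 hG
      have hH : HasPrincipalMinors D₀ H := fun k => by
        rw [← detIdeal_bordered_one, ← hGH.detIdeal_eq]
        exact hG (k + 1)
      obtain ⟨Φ, hΦ⟩ := ih hH
      exact ⟨_, hΦ.smul_of_matEquiv_bordered hGH d⟩

theorem exists_matEquiv_bordered_one_of_isLocalHom {D : Type*} [EuclideanDomain D] (q : A →+* D)
    [IsLocalHom q] (hq : Function.Surjective q) {F : Matrix (Fin (l + 1)) (Fin (m + 1)) A}
    (hF : detIdeal F 1 = ⊤) : ∃ G, MatEquiv F (bordered 1 0 0 G) := by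
  have hqF : detIdeal (F.map q) 1 = ⊤ := by rw [detIdeal_map, hF, Ideal.map_top]
  have hqF0 : F.map q ≠ 0 := fun h => by simp [h] at hqF
  obtain ⟨d, G, hG, hd⟩ := exists_elemEquiv_bordered_detIdeal_one_le hqF0
  obtain ⟨F', hF', hF'G⟩ := hG.exists_lift hq
  have hd' : IsUnit d := Ideal.span_singleton_eq_top.1 (top_le_iff.1 (hqF ▸ hd))
  have corner : q (F' 0 0) = d := congr_fun₂ hF'G 0 0
  obtain ⟨H, hH⟩ := exists_matEquiv_bordered_one (isUnit_of_map_unit q _ (corner ▸ hd'))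
  exact ⟨H, hF'.matEquiv.trans hH⟩

theorem exists_isSmithForm_of_isLocalHom [IsDomain A] {D : Type*} [EuclideanDomain D]
    (q : A →+* D) [IsLocalHom q] (hq : Function.Surjective q) {F : Matrix (Fin l) (Fin m) A}
    (hF : ∀ k, ∃ δ, detIdeal F k = Ideal.span {δ}) : ∃ Φ, IsSmithForm F Φ := by
  have hF0 : HasPrincipalMinors 0 F := fun k => (hF k).imp fun δ hδ => ⟨hδ, .inr (dvd_zero δ)⟩
  exact hF0.exists_isSmithForm fun l m G hG _ => exists_matEquiv_bordered_one_of_isLocalHom q hq hG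

end SmithForm

section Patching

open Polynomial

variable {A B : Type*} [CommRing A] [CommRing B] {l m : ℕ}

theorem map_map_ringHom {C : Type*} [CommRing C] (f : A →+* B) (g : B →+* C)
    (F : Matrix (Fin l) (Fin m) A) : (F.map f).map g = F.map (g.comp f) :=
  rfl

/-- The endomorphism `p => p(0)` of `A[x]`. -/
noncomputable def constPart : A[X] →+* A[X] :=
  Polynomial.C.comp (evalRingHom 0)

/-- The homomorphism `A[x] → A[x][y]` sending `x` to `x + a y`. -/
noncomputable def shear (a : A) : A[X] →+* A[X][X] :=
  eval₂RingHom (Polynomial.C.comp Polynomial.C)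
    (Polynomial.C Polynomial.X + Polynomial.C (Polynomial.C a) * Polynomial.X)

/-- The endomorphism of `A[x][y]` over `A[x]` sending `y` to `a y`. -/
noncomputable def scaleOuter (a : A) : A[X][X] →+* A[X][X] :=
  compRingHom (Polynomial.C (Polynomial.C a) * Polynomial.X)

theorem shear_zero : shear (0 : A) = Polynomial.C := by
  apply Polynomial.ringHom_ext <;> simp [shear]

theorem scaleOuter_comp_C (a : A) : (scaleOuter a).comp Polynomial.C = Polynomial.C := by
  apply Polynomial.ringHom_ext <;> simp [scaleOuter]

theorem scaleOuter_comp_shear (a s : A) : (scaleOuter a).comp (shear s) = shear (a * s) := by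
  apply Polynomial.ringHom_ext <;> simp [shear, scaleOuter, mul_left_comm, mul_assoc]

theorem eval₂RingHom_shear_comp_C (t : A) :
    (eval₂RingHom (shear t) Polynomial.X).comp Polynomial.C = shear t := by
  apply Polynomial.ringHom_ext <;> simp [shear]

theorem eval₂RingHom_shear_comp_shear (s t : A) :
    (eval₂RingHom (shear t) Polynomial.X).comp (shear s) = shear (t + s) := by
  apply Polynomial.ringHom_ext <;> simp [shear, add_mul, add_assoc]

theorem eval₂RingHom_constPart_comp_C :
    (eval₂RingHom (constPart (A := A)) Polynomial.X).comp Polynomial.C = constPart := by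
  apply Polynomial.ringHom_ext <;> simp [constPart]

theorem eval₂RingHom_constPart_comp_shear :
    (eval₂RingHom constPart Polynomial.X).comp (shear (1 : A)) = RingHom.id _ := by
  apply Polynomial.ringHom_ext <;> simp [shear, constPart]

theorem shear_comp_constPart (a : A) :
    (shear a).comp constPart = Polynomial.C.comp constPart := by
  apply Polynomial.ringHom_ext <;> simp [shear, constPart]

theorem evalRingHom_comp_shear (a : A) :
    (evalRingHom (0 : A[X])).comp (shear a) = RingHom.id _ := by
  apply Polynomial.ringHom_ext <;> simp [shear]

theorem mapRingHom_comp_shear (g : A →+* B) (a : A) :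
    (mapRingHom (mapRingHom g)).comp (shear a) = (shear (g a)).comp (mapRingHom g) := by
  apply Polynomial.ringHom_ext <;> simp [shear]

theorem mapRingHom_comp_scaleOuter (g : A →+* B) (a : A) :
    (mapRingHom (mapRingHom g)).comp (scaleOuter a) =
      (scaleOuter (g a)).comp (mapRingHom (mapRingHom g)) := by
  apply Polynomial.ringHom_ext <;> simp [scaleOuter]

/-- Quillen's ideal of all `s` for which the substitution `x => x + s y` does not change the
equivalence class of `F`. -/
noncomputable def quillenIdeal (F : Matrix (Fin l) (Fin m) A[X]) : Ideal A where
  carrier := {s | MatEquiv (F.map (shear s)) (F.map Polynomial.C)}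
  zero_mem' := by
    change MatEquiv _ _
    rw [shear_zero]
    exact .refl _
  add_mem' {s t} hs ht := by
    have h := MatEquiv.map (eval₂RingHom (shear s) Polynomial.X) ht
    rw [map_map_ringHom, map_map_ringHom, eval₂RingHom_shear_comp_shear,
      eval₂RingHom_shear_comp_C] at h
    exact h.trans hs
  smul_mem' a s hs := by
    have h := MatEquiv.map (scaleOuter a) hs
    rwa [map_map_ringHom, map_map_ringHom, scaleOuter_comp_shear, scaleOuter_comp_C] at h

theorem mem_quillenIdeal {F : Matrix (Fin l) (Fin m) A[X]} {s : A} :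
    s ∈ quillenIdeal F ↔ MatEquiv (F.map (shear s)) (F.map Polynomial.C) :=
  Iff.rfl

theorem matEquiv_map_constPart_of_quillenIdeal_eq_top {F : Matrix (Fin l) (Fin m) A[X]}
    (h : quillenIdeal F = ⊤) : MatEquiv F (F.map constPart) := by
  have h1 : MatEquiv (F.map (shear 1)) (F.map Polynomial.C) :=
    mem_quillenIdeal.1 (h ▸ Submodule.mem_top)
  have := h1.map (eval₂RingHom constPart Polynomial.X)
  rwa [map_map_ringHom, map_map_ringHom, eval₂RingHom_constPart_comp_shear,
    eval₂RingHom_constPart_comp_C] at this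

theorem exists_mem_scaleOuter_mem_range (M : Submonoid A) [Algebra A B] [IsLocalization M B]
    {ι : Type*} [Finite ι] (w : ι → B[X][X])
    (hw : ∀ i, Polynomial.C ((w i).coeff 0) ∈ (mapRingHom (mapRingHom (algebraMap A B))).range) :
    ∃ s ∈ M, ∀ i, scaleOuter (algebraMap A B s) (w i) ∈
      (mapRingHom (mapRingHom (algebraMap A B))).range := by
  let := Polynomial.algebra A B
  let := Polynomial.algebra A[X] B[X]
  have := Polynomial.isLocalization M B
  have := Polynomial.isLocalization (M.map (Polynomial.C : A →+* A[X])) B[X]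
  let M' := (M.map (Polynomial.C : A →+* A[X])).map (Polynomial.C : A[X] →+* A[X][X])
  obtain ⟨⟨_, _, ⟨s, hs, rfl⟩, rfl⟩, hclear⟩ :=
    IsLocalization.exist_integer_multiples_of_finite M' fun i => (w i).divX
  refine ⟨s, hs, fun i => ?_⟩
  obtain ⟨u, hu⟩ := hclear i
  have hu' : mapRingHom (mapRingHom (algebraMap A B)) u =
      Polynomial.C (Polynomial.C (algebraMap A B s)) * (w i).divX := by
    rw [Algebra.smul_def] at hu
    refine hu.trans (congrArg (· * _) ?_)
    simp [algebraMap_def]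
  have hscale : scaleOuter (algebraMap A B s) (w i) =
      Polynomial.X * mapRingHom (mapRingHom (algebraMap A B)) (scaleOuter s u) +
        Polynomial.C ((w i).coeff 0) := by
    have hX : scaleOuter (algebraMap A B s) Polynomial.X =
        Polynomial.C (Polynomial.C (algebraMap A B s)) * Polynomial.X := by
      simp [scaleOuter]
    have hC (c : B[X]) : scaleOuter (algebraMap A B s) (Polynomial.C c) = Polynomial.C c := by
      simp [scaleOuter]
    have hdivX := congrArg (scaleOuter (algebraMap A B s)) (X_mul_divX_add (w i))
    rw [← RingHom.comp_apply (mapRingHom _) (scaleOuter s), mapRingHom_comp_scaleOuter,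
      RingHom.comp_apply, hu', ← hdivX]
    simp only [map_add, map_mul, hX, hC]
    ring
  rw [hscale]
  exact add_mem (mul_mem ⟨Polynomial.X, by simp⟩ ⟨_, rfl⟩) (hw i)

theorem det_eq_one_of_map_evalRingHom_eq_one [IsDomain A] {W : Matrix (Fin l) (Fin l) A[X]}
    (hW : IsUnit W.det) (hW0 : W.map (evalRingHom 0) = 1) : W.det = 1 := by
  obtain ⟨c, -, hc⟩ := Polynomial.isUnit_iff.1 hW
  have hc1 : evalRingHom 0 W.det = 1 := by
    rw [RingHom.map_det, RingHom.mapMatrix_apply, hW0, det_one]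
  rw [← hc, coe_evalRingHom, Polynomial.eval_C] at hc1
  rw [← hc, hc1, map_one]

theorem exists_map_shear_one_eq {F : Matrix (Fin l) (Fin m) A[X]}
    (h : MatEquiv F (F.map constPart)) :
    ∃ (U : Matrix (Fin l) (Fin l) A[X][X]) (V : Matrix (Fin m) (Fin m) A[X][X]),
      IsUnit U.det ∧ IsUnit V.det ∧ U.map (evalRingHom 0) = 1 ∧ V.map (evalRingHom 0) = 1 ∧
        F.map (shear 1) = U * F.map Polynomial.C * V := by
  obtain ⟨U, V, hU, hV, hF⟩ := h
  have hUC := isUnit_det_map Polynomial.C hU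
  have hVC := isUnit_det_map Polynomial.C hV
  have eval_shear {k : ℕ} (W : Matrix (Fin k) (Fin k) A[X]) :
      (W.map (shear 1)).map (evalRingHom 0) = W := by
    rw [map_map_ringHom, evalRingHom_comp_shear]
    rfl
  have eval_C {k : ℕ} (W : Matrix (Fin k) (Fin k) A[X]) :
      (W.map Polynomial.C).map (evalRingHom 0) = W := by
    ext1 i j
    simp
  refine ⟨U.map (shear 1) * (U.map Polynomial.C)⁻¹, (V.map Polynomial.C)⁻¹ * V.map (shear 1),
    ?_, ?_, ?_, ?_, ?_⟩
  · rw [det_mul]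
    exact (isUnit_det_map _ hU).mul (isUnit_nonsing_inv_det _ hUC)
  · rw [det_mul]
    exact (isUnit_nonsing_inv_det _ hVC).mul (isUnit_det_map _ hV)
  · rw [Matrix.map_mul, map_inv_of_isUnit_det _ hUC, eval_shear, eval_C, mul_nonsing_inv _ hU]
  · rw [Matrix.map_mul, map_inv_of_isUnit_det _ hVC, eval_shear, eval_C, nonsing_inv_mul _ hV]
  · have hFC : F.map Polynomial.C = U.map Polynomial.C * (F.map constPart).map Polynomial.C *
        V.map Polynomial.C := by
      conv_lhs => rw [hF]
      simp only [Matrix.map_mul]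
    rw [hFC, Matrix.mul_assoc (U.map Polynomial.C), Matrix.mul_assoc (U.map (shear 1)),
      nonsing_inv_mul_cancel_left _ _ hUC, ← Matrix.mul_assoc,
      ← Matrix.mul_assoc (U.map (shear 1)), mul_nonsing_inv_cancel_right _ _ hVC]
    conv_lhs => rw [hF]
    rw [Matrix.map_mul, Matrix.map_mul, map_map_ringHom, map_map_ringHom, shear_comp_constPart]

theorem map_shear_eq_of_map_shear_one_eq {F : Matrix (Fin l) (Fin m) A[X]}
    {U : Matrix (Fin l) (Fin l) A[X][X]} {V : Matrix (Fin m) (Fin m) A[X][X]}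
    (h : F.map (shear 1) = U * F.map Polynomial.C * V) (s : A) :
    F.map (shear s) = U.map (scaleOuter s) * F.map Polynomial.C * V.map (scaleOuter s) := by
  have hscaled := congrArg (fun W => W.map (scaleOuter s)) h
  rwa [Matrix.map_mul, Matrix.map_mul, map_map_ringHom, map_map_ringHom, scaleOuter_comp_shear,
    scaleOuter_comp_C, mul_one] at hscaled

theorem mapRingHom_mapRingHom_injective {g : A →+* B} (hg : Function.Injective g) :
    Function.Injective (mapRingHom (mapRingHom g)) :=
  Polynomial.map_injective _ (Polynomial.map_injective _ hg)

theorem exists_det_eq_one_map_eq_map_scaleOuter [IsDomain B] [Algebra A B]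
    {M : Submonoid A} (hM : M ≤ nonZeroDivisors A) [IsLocalization M B]
    {U : Matrix (Fin l) (Fin l) B[X][X]} {V : Matrix (Fin m) (Fin m) B[X][X]}
    (hU : IsUnit U.det) (hV : IsUnit V.det)
    (hU0 : U.map (evalRingHom 0) = 1) (hV0 : V.map (evalRingHom 0) = 1) :
    ∃ s ∈ M, ∃ (P : Matrix (Fin l) (Fin l) A[X][X]) (Q : Matrix (Fin m) (Fin m) A[X][X]),
      P.det = 1 ∧ Q.det = 1 ∧
        P.map (mapRingHom (mapRingHom (algebraMap A B))) =
          U.map (scaleOuter (algebraMap A B s)) ∧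
        Q.map (mapRingHom (mapRingHom (algebraMap A B))) =
          V.map (scaleOuter (algebraMap A B s)) := by
  set ι : A[X][X] →+* B[X][X] := mapRingHom (mapRingHom (algebraMap A B))
  have hι : Function.Injective ι := mapRingHom_mapRingHom_injective (IsLocalization.injective B hM)
  have coeff_mem {k : ℕ} {W : Matrix (Fin k) (Fin k) B[X][X]} (hW0 : W.map (evalRingHom 0) = 1)
      (i j : Fin k) : Polynomial.C ((W i j).coeff 0) ∈ ι.range := by
    rw [coeff_zero_eq_eval_zero, ← coe_evalRingHom, ← Matrix.map_apply (f := evalRingHom 0), hW0,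
      one_apply]
    split_ifs
    exacts [by simp, by simp]
  have det_eq_one {k : ℕ} {W : Matrix (Fin k) (Fin k) B[X][X]} (hW : IsUnit W.det)
      (hW0 : W.map (evalRingHom 0) = 1) {s : A} {P : Matrix (Fin k) (Fin k) A[X][X]}
      (hP : P.map ι = W.map (scaleOuter (algebraMap A B s))) : P.det = 1 := by
    apply hι
    rw [RingHom.map_det, RingHom.mapMatrix_apply, hP, ← RingHom.mapMatrix_apply, ← RingHom.map_det,
      det_eq_one_of_map_evalRingHom_eq_one hW hW0, map_one, map_one]
  obtain ⟨s, hs, hrange⟩ := exists_mem_scaleOuter_mem_range M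
    (Sum.elim (fun p : Fin l × Fin l => U p.1 p.2) fun p : Fin m × Fin m => V p.1 p.2)
    (Sum.rec (fun p => coeff_mem hU0 p.1 p.2) fun p => coeff_mem hV0 p.1 p.2)
  choose P hP using fun i j => hrange (.inl (i, j))
  choose Q hQ using fun i j => hrange (.inr (i, j))
  have hP' : (Matrix.of P).map ι = U.map (scaleOuter (algebraMap A B s)) := Matrix.ext hP
  have hQ' : (Matrix.of Q).map ι = V.map (scaleOuter (algebraMap A B s)) := Matrix.ext hQ
  exact ⟨s, hs, Matrix.of P, Matrix.of Q, det_eq_one hU hU0 hP', det_eq_one hV hV0 hQ', hP', hQ'⟩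

theorem exists_mem_quillenIdeal_of_isLocalization [IsDomain A] [Algebra A B] {M : Submonoid A}
    (hM : M ≤ nonZeroDivisors A) [IsLocalization M B] {F : Matrix (Fin l) (Fin m) A[X]}
    (h : MatEquiv (F.map (mapRingHom (algebraMap A B)))
      ((F.map (mapRingHom (algebraMap A B))).map constPart)) :
    ∃ s ∈ M, s ∈ quillenIdeal F := by
  have : IsDomain B := IsLocalization.isDomain_of_le_nonZeroDivisors B hM
  obtain ⟨U, V, hU, hV, hU0, hV0, hUV⟩ := exists_map_shear_one_eq h
  obtain ⟨s, hs, P, Q, hP1, hQ1, hP, hQ⟩ :=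
    exists_det_eq_one_map_eq_map_scaleOuter (A := A) hM hU hV hU0 hV0
  refine ⟨s, hs, P, Q, hP1 ▸ isUnit_one, hQ1 ▸ isUnit_one, ?_⟩
  apply Matrix.map_injective (mapRingHom_mapRingHom_injective (IsLocalization.injective B hM))
  change (F.map (shear s)).map (mapRingHom (mapRingHom (algebraMap A B))) =
    (P * F.map Polynomial.C * Q).map (mapRingHom (mapRingHom (algebraMap A B)))
  rw [Matrix.map_mul, Matrix.map_mul, hP, hQ, map_map_ringHom, map_map_ringHom,
    mapRingHom_comp_shear, mapRingHom_comp_C, ← map_map_ringHom, ← map_map_ringHom]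
  exact map_shear_eq_of_map_shear_one_eq hUV _

theorem matEquiv_map_constPart_of_forall_isMaximal [IsDomain A] {F : Matrix (Fin l) (Fin m) A[X]}
    (h : ∀ (M : Ideal A) [M.IsMaximal],
      MatEquiv (F.map (mapRingHom (algebraMap A (Localization.AtPrime M))))
        ((F.map (mapRingHom (algebraMap A (Localization.AtPrime M)))).map constPart)) :
    MatEquiv F (F.map constPart) := by
  apply matEquiv_map_constPart_of_quillenIdeal_eq_top
  by_contra hne
  obtain ⟨M, _, hle⟩ := Ideal.exists_le_maximal _ hne
  obtain ⟨s, hsM, hs⟩ :=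
    exists_mem_quillenIdeal_of_isLocalization M.primeCompl_le_nonZeroDivisors (h M)
  exact hsM (hle hs)

end Patching

section DivByMonic

open Polynomial IsLocalRing

variable {A : Type*} [CommRing A]

/-- The `A`-linear map sending a polynomial to its quotient by the monic polynomial `g`; it is
zero when `g` is not monic. -/
noncomputable def divByMonicHom (g : A[X]) : A[X] →ₗ[A] A[X] where
  toFun p := p /ₘ g
  map_add' p q := by
    nontriviality A
    by_cases hg : g.Monic
    · refine (div_modByMonic_unique (p /ₘ g + q /ₘ g) (p %ₘ g + q %ₘ g) hg ⟨?_, ?_⟩).1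
      · linear_combination modByMonic_add_div p g + modByMonic_add_div q g
      · exact (degree_add_le _ _).trans_lt
          (max_lt (degree_modByMonic_lt _ hg) (degree_modByMonic_lt _ hg))
    · simp only [divByMonic_eq_of_not_monic _ hg, add_zero]
  map_smul' a p := by
    nontriviality A
    by_cases hg : g.Monic
    · refine (div_modByMonic_unique (a • (p /ₘ g)) (a • (p %ₘ g)) hg ⟨?_, ?_⟩).1
      · rw [mul_smul_comm, ← smul_add, modByMonic_add_div]
      · exact (degree_smul_le _ _).trans_lt (degree_modByMonic_lt _ hg)
    · simp only [divByMonic_eq_of_not_monic _ hg, smul_zero]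

theorem mem_smul_top_pi_iff {n M : Type*} [Finite n] [AddCommGroup M] [Module A M] {I : Ideal A}
    {v : n → M} :
    v ∈ I • (⊤ : Submodule A (n → M)) ↔ ∀ i, v i ∈ I • (⊤ : Submodule A M) := by
  classical
  cases nonempty_fintype n
  refine ⟨fun hv i => Submodule.smul_top_le_comap_smul_top I (LinearMap.proj i) hv, fun hv => ?_⟩
  rw [← Finset.univ_sum_single v]
  exact Submodule.sum_mem _ fun i _ =>
    Submodule.smul_top_le_comap_smul_top I (LinearMap.single A (fun _ => M) i) (hv i)

/-- The `A`-linear endomorphism `y => (y W) / h` of the module of row vectors over `A[x]`, the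
division by the monic polynomial `h` being entrywise. -/
noncomputable def vecMulDivByMonic {n : Type*} [Fintype n] (W : Matrix n n A[X]) (h : A[X]) :
    (n → A[X]) →ₗ[A] (n → A[X]) :=
  (divByMonicHom h).compLeft n ∘ₗ (Matrix.vecMulBilin A A).flip W

@[simp]
theorem vecMulDivByMonic_apply {n : Type*} [Fintype n] (W : Matrix n n A[X]) (h : A[X])
    (y : n → A[X]) (i : n) : vecMulDivByMonic W h y i = (y ᵥ* W) i /ₘ h :=
  rfl

theorem range_vecMulDivByMonic_sup_range_modByMonicHom {n : Type*} [Fintype n]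
    [DecidableEq n] {g g₂ : A[X]} {W W₂ : Matrix n n A[X]} (hg : g.Monic) (hg₂ : g₂.Monic)
    (hWW : W₂ * W = (g * g₂) • 1) :
    LinearMap.range (vecMulDivByMonic W (Polynomial.X * g)) ⊔
      LinearMap.range ((AdjoinRoot.modByMonicHom hg₂).compLeft n) = ⊤ := by
  refine eq_top_iff.2 fun z _ => ?_
  have hquot : vecMulDivByMonic W (Polynomial.X * g) ((fun i => Polynomial.X * (z i /ₘ g₂)) ᵥ* W₂) =
      fun i => g₂ * (z i /ₘ g₂) := by
    funext i
    rw [vecMulDivByMonic_apply, Matrix.vecMul_vecMul, hWW, Matrix.vecMul_smul, Matrix.vecMul_one,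
      Pi.smul_apply, smul_eq_mul, mul_comm g g₂, mul_assoc, ← mul_assoc g Polynomial.X,
      mul_left_comm, mul_comm g Polynomial.X, mul_divByMonic_cancel_left _ (monic_X.mul hg)]
  have hsplit : z = (fun i => g₂ * (z i /ₘ g₂)) + fun i => z i %ₘ g₂ := by
    funext i
    rw [Pi.add_apply, add_comm, modByMonic_add_div]
  rw [hsplit]
  exact Submodule.add_mem_sup ⟨_, hquot⟩
    ⟨fun i => AdjoinRoot.mk g₂ (z i), funext fun i => AdjoinRoot.modByMonicHom_mk hg₂ (z i)⟩

section Nakayama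

variable [IsLocalRing A] {n : Type*}

theorem mem_maximalIdeal_smul_top_iff [Finite n] {v : n → A[X]} :
    v ∈ maximalIdeal A • (⊤ : Submodule A (n → A[X])) ↔ ∀ i, (v i).map (residue A) = 0 := by
  rw [mem_smul_top_pi_iff]
  refine forall_congr' fun i => ?_
  rw [Ideal.smul_top_eq_map, Submodule.restrictScalars_mem, Polynomial.algebraMap_eq,
    ← ker_residue, ← ker_mapRingHom, RingHom.mem_ker, coe_mapRingHom]

variable [Fintype n] [DecidableEq n] {g g₂ : A[X]} {W W₂ : Matrix n n A[X]}

theorem map_vecMulDivByMonic (hg : g.Monic)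
    (hW : W.map (mapRingHom (residue A)) = g.map (residue A) • 1) (y : n → A[X]) (i : n) :
    (vecMulDivByMonic W (Polynomial.X * g) y i).map (residue A) =
      g.map (residue A) * (y i).map (residue A) /ₘ (Polynomial.X * g.map (residue A)) := by
  have hyW : ((y ᵥ* W) i).map (residue A) = g.map (residue A) * (y i).map (residue A) := by
    rw [← coe_mapRingHom, RingHom.map_vecMul, hW, Matrix.vecMul_smul, Matrix.vecMul_one]
    rfl
  rw [vecMulDivByMonic_apply, map_divByMonic _ (monic_X.mul hg), hyW, Polynomial.map_mul,
    Polynomial.map_X]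

theorem range_vecMulDivByMonic_sup_maximalIdeal_smul (hg : g.Monic)
    (hW : W.map (mapRingHom (residue A)) = g.map (residue A) • 1) :
    LinearMap.range (vecMulDivByMonic W (Polynomial.X * g)) ⊔ maximalIdeal A • ⊤ = ⊤ := by
  refine eq_top_iff.2 fun z _ => ?_
  have hz : z - vecMulDivByMonic W (Polynomial.X * g) ((Polynomial.X : A[X]) • z) ∈
      maximalIdeal A • (⊤ : Submodule A (n → A[X])) := by
    refine mem_maximalIdeal_smul_top_iff.2 fun i => ?_
    rw [Pi.sub_apply, Polynomial.map_sub, map_vecMulDivByMonic hg hW, Pi.smul_apply, smul_eq_mul,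
      Polynomial.map_mul, Polynomial.map_X, mul_left_comm, ← mul_assoc,
      mul_divByMonic_cancel_left _ (monic_X.mul (hg.map _)), sub_self]
  rw [← add_sub_cancel (vecMulDivByMonic W (Polynomial.X * g) ((Polynomial.X : A[X]) • z)) z]
  exact Submodule.add_mem_sup ⟨_, rfl⟩ hz

theorem vecMulDivByMonic_surjective (hg : g.Monic) (hg₂ : g₂.Monic)
    (hWW : W₂ * W = (g * g₂) • 1)
    (hW : W.map (mapRingHom (residue A)) = g.map (residue A) • 1) :
    Function.Surjective (vecMulDivByMonic W (Polynomial.X * g)) := by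
  set T := vecMulDivByMonic W (Polynomial.X * g)
  set S := LinearMap.range ((AdjoinRoot.modByMonicHom hg₂).compLeft n)
  have hTS : LinearMap.range T ⊔ S = ⊤ := range_vecMulDivByMonic_sup_range_modByMonicHom hg hg₂ hWW
  have hfg : S.FG := by
    rw [show S = _ from LinearMap.range_eq_map _]
    have := hg₂.finite_adjoinRoot
    exact (Module.Finite.fg_top (R := A) (M := n → AdjoinRoot g₂)).map _
  have hST : S ≤ LinearMap.range T := by
    refine Submodule.le_of_le_smul_of_le_jacobson_bot (I := maximalIdeal A) hfg
      (jacobson_eq_maximalIdeal _ bot_ne_top).ge (le_top.trans ?_)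
    rw [← range_vecMulDivByMonic_sup_maximalIdeal_smul hg hW, ← hTS, Submodule.smul_sup]
    exact sup_le le_sup_left (sup_le (Submodule.smul_le_right.trans le_sup_left) le_sup_right)
  rw [← LinearMap.range_eq_top, ← hTS, sup_eq_left.2 hST]

theorem vecMulDivByMonic_single_mem (hg : g.Monic)
    (hW : W.map (mapRingHom (residue A)) = g.map (residue A) • 1) (i : n) :
    vecMulDivByMonic W (Polynomial.X * g) (Pi.single i 1) ∈
      maximalIdeal A • (⊤ : Submodule A (n → A[X])) := by
  refine mem_maximalIdeal_smul_top_iff.2 fun j => ?_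
  have hmonic : (Polynomial.X * g.map (residue A)).Monic := monic_X.mul (hg.map _)
  rw [map_vecMulDivByMonic hg hW, divByMonic_eq_zero_iff hmonic]
  rcases eq_or_ne j i with rfl | hji
  · rw [Pi.single_eq_same, Polynomial.map_one, mul_one, X_mul]
    exact degree_lt_degree_mul_X (hg.map _).ne_zero
  · rw [Pi.single_eq_of_ne hji, Polynomial.map_zero, mul_zero, degree_zero]
    exact bot_lt_iff_ne_bot.2 (degree_ne_bot.2 hmonic.ne_zero)

theorem exists_map_residue_eq_one_natDegree_mul_le (hg : g.Monic) (hg₂ : g₂.Monic)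
    (hWW : W₂ * W = (g * g₂) • 1)
    (hW : W.map (mapRingHom (residue A)) = g.map (residue A) • 1) :
    ∃ Y : Matrix n n A[X], Y.map (mapRingHom (residue A)) = 1 ∧
      ∀ i j, ((Y * W) i j).natDegree ≤ g.natDegree := by
  set T := vecMulDivByMonic W (Polynomial.X * g)
  have hcorrection (i : n) : ∃ δ ∈ maximalIdeal A • (⊤ : Submodule A (n → A[X])),
      T δ = T (Pi.single i 1) := by
    have hmem := vecMulDivByMonic_single_mem hg hW i
    rwa [← LinearMap.range_eq_top.2 (vecMulDivByMonic_surjective hg hg₂ hWW hW),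
      ← Submodule.map_top, ← Submodule.map_smul''] at hmem
  choose δ hδ hTδ using hcorrection
  refine ⟨1 - Matrix.of δ, ?_, fun i j => ?_⟩
  · have hδ0 : (Matrix.of δ).map (mapRingHom (residue A)) = 0 :=
      Matrix.ext fun i j => mem_maximalIdeal_smul_top_iff.1 (hδ i) j
    rw [Matrix.map_sub _ (map_sub _), hδ0, sub_zero,
      Matrix.map_one _ (map_zero _) (map_one _)]
  · have hrow : (1 - Matrix.of δ) i = Pi.single i 1 - δ i := by
      funext k
      simp only [Matrix.sub_apply, Matrix.of_apply, Matrix.one_eq_pi_single, Pi.sub_apply]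
    have hquot : (((1 - Matrix.of δ) * W) i j) /ₘ (Polynomial.X * g) = 0 := by
      rw [Matrix.mul_apply_eq_vecMul, hrow, ← vecMulDivByMonic_apply, map_sub, hTδ, sub_self,
        Pi.zero_apply]
    have hdeg : degree (Polynomial.X * g) = (g.natDegree + 1 : ℕ) := by
      nontriviality A
      rw [X_mul, degree_mul_X, degree_eq_natDegree hg.ne_zero, Nat.cast_succ]
    rw [divByMonic_eq_zero_iff (monic_X.mul hg), hdeg] at hquot
    exact natDegree_le_iff_coeff_eq_zero.2 ((degree_lt_iff_coeff_zero _ _).1 hquot)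

end Nakayama
end DivByMonic

section Infinity

open Polynomial IsLocalRing

variable (A : Type*) [CommRing A]

/-- The multiplicative set of monic polynomials. -/
def monicSubmonoid : Submonoid A[X] where
  carrier := {p | p.Monic}
  one_mem' := monic_one
  mul_mem' := Monic.mul

/-- The ring `A[x]` with all monic polynomials inverted. -/
abbrev MonicLocalization : Type _ :=
  Localization (monicSubmonoid A)

/-- The rational functions over `A` with monic denominator that are regular at `x = ∞`. -/
def regularAtInfinity : Subring (MonicLocalization A) where
  carrier := {c | ∃ p g : A[X], g.Monic ∧ p.natDegree ≤ g.natDegree ∧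
    c * algebraMap A[X] _ g = algebraMap A[X] _ p}
  one_mem' := ⟨1, 1, monic_one, le_rfl, by rw [one_mul]⟩
  zero_mem' := ⟨0, 1, monic_one, Nat.zero_le _, by rw [map_zero, zero_mul]⟩
  neg_mem' := by
    rintro c ⟨p, g, hg, hdeg, hc⟩
    exact ⟨-p, g, hg, (natDegree_neg p).trans_le hdeg, by
      rw [map_neg, ← hc]
      ring⟩
  mul_mem' := by
    rintro c c' ⟨p, g, hg, hdeg, hc⟩ ⟨p', g', hg', hdeg', hc'⟩
    refine ⟨p * p', g * g', hg.mul hg', ?_, ?_⟩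
    · rw [hg.natDegree_mul hg']
      exact natDegree_mul_le.trans (add_le_add hdeg hdeg')
    · rw [map_mul, map_mul, ← hc, ← hc', mul_mul_mul_comm]
  add_mem' := by
    rintro c c' ⟨p, g, hg, hdeg, hc⟩ ⟨p', g', hg', hdeg', hc'⟩
    refine ⟨p * g' + g * p', g * g', hg.mul hg', ?_, ?_⟩
    · rw [hg.natDegree_mul hg']
      exact natDegree_add_le_of_degree_le (natDegree_mul_le.trans (add_le_add_left hdeg _))
        (natDegree_mul_le.trans (add_le_add_right hdeg' _))
    · rw [map_add, map_mul, map_mul, map_mul, ← hc, ← hc']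
      ring

variable {A} in
theorem mem_regularAtInfinity {c : MonicLocalization A} :
    c ∈ regularAtInfinity A ↔ ∃ p g : A[X], g.Monic ∧ p.natDegree ≤ g.natDegree ∧
      c * algebraMap A[X] _ g = algebraMap A[X] _ p :=
  Iff.rfl

theorem monicSubmonoid_le_nonZeroDivisors : monicSubmonoid A ≤ nonZeroDivisors A[X] :=
  fun _ hp => Monic.mem_nonZeroDivisors hp

theorem algebraMap_monicLocalization_injective :
    Function.Injective (algebraMap A[X] (MonicLocalization A)) :=
  IsLocalization.injective _ (monicSubmonoid_le_nonZeroDivisors A)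

variable {A}

theorem algebraMap_C_mem_regularAtInfinity (a : A) :
    algebraMap _ _ (Polynomial.C a) ∈ regularAtInfinity A :=
  mem_regularAtInfinity.2 ⟨Polynomial.C a, 1, monic_one, by simp, by simp⟩

theorem isUnit_algebraMap_monicLocalization_iff {p : A[X]} :
    IsUnit (algebraMap A[X] (MonicLocalization A) p) ↔ ∃ g : A[X], g.Monic ∧ p ∣ g :=
  IsLocalization.algebraMap_isUnit_iff (monicSubmonoid A)

theorem exists_eq_C_of_mem_regularAtInfinity {p : A[X]}
    (hp : algebraMap _ (MonicLocalization A) p ∈ regularAtInfinity A) :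
    ∃ a, p = Polynomial.C a := by
  obtain ⟨q, g, hg, hdeg, hpg⟩ := mem_regularAtInfinity.1 hp
  rw [← map_mul] at hpg
  rw [← algebraMap_monicLocalization_injective A hpg] at hdeg
  refine ⟨_, eq_C_of_natDegree_eq_zero ?_⟩
  by_cases hp : p = 0
  · rw [hp, natDegree_zero]
  · rw [mul_comm, hg.natDegree_mul' hp] at hdeg
    lia

theorem exists_monic_smul_eq_map {n : Type*} [Finite n] (W : Matrix n n (MonicLocalization A)) :
    ∃ (g : A[X]) (W' : Matrix n n A[X]), g.Monic ∧
      W'.map (algebraMap _ (MonicLocalization A)) = algebraMap _ (MonicLocalization A) g • W := by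
  obtain ⟨g, hg⟩ := IsLocalization.exist_integer_multiples_of_finite (monicSubmonoid A)
    fun ij : n × n => W ij.1 ij.2
  choose w hw using hg
  refine ⟨g, Matrix.of fun i j => w (i, j), g.2, Matrix.ext fun i j => ?_⟩
  rw [Matrix.map_apply, Matrix.of_apply, hw, Matrix.smul_apply, Algebra.smul_def, smul_eq_mul]

theorem det_mem_of_forall_mem {R : Type*} [CommRing R] {n : Type*} [Fintype n] [DecidableEq n]
    (S : Subring R) {M : Matrix n n R} (hM : ∀ i j, M i j ∈ S) : M.det ∈ S := by
  have hlift : (Matrix.of fun i j => (⟨M i j, hM i j⟩ : S)).map S.subtype = M := rfl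
  rw [← hlift, ← RingHom.mapMatrix_apply, ← RingHom.map_det]
  exact SetLike.coe_mem _

variable [IsLocalRing A]

theorem isUnit_of_dvd_monic_of_map_residue_eq_one [IsDomain A] {y g : A[X]} (hg : g.Monic)
    (hyg : y ∣ g) (hy : y.map (residue A) = 1) : IsUnit y := by
  have hlead : IsUnit y.leadingCoeff := hg.isUnit_leadingCoeff_of_dvd hyg
  have hdeg : y.natDegree = 0 := by
    rw [← natDegree_map_of_leadingCoeff_ne_zero (residue A) (hlead.map _).ne_zero, hy,
      natDegree_one]
  rw [eq_C_of_natDegree_eq_zero hdeg]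
  rw [leadingCoeff, hdeg] at hlead
  exact hlead.map _

variable (A) in
/-- The field of rational functions over the residue field of `A`. -/
abbrev ResidueFunctionField : Type _ :=
  FractionRing (ResidueField A)[X]

variable (A) in
/-- Reduction of the coefficients modulo the maximal ideal, `A[x] → k(x)`. -/
noncomputable def reduction : A[X] →+* ResidueFunctionField A :=
  (algebraMap (ResidueField A)[X] _).comp (mapRingHom (residue A))

theorem reduction_eq_zero_iff {p : A[X]} : reduction A p = 0 ↔ p.map (residue A) = 0 :=
  FaithfulSMul.algebraMap_eq_zero_iff (ResidueField A)[X] (ResidueFunctionField A)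

theorem isUnit_reduction_of_monic (p : monicSubmonoid A) : IsUnit (reduction A (p : A[X])) :=
  isUnit_iff_ne_zero.2 fun hp => (p.2.map (residue A)).ne_zero (reduction_eq_zero_iff.1 hp)

variable (A) in
/-- The extension of `reduction` to fractions with monic denominator. -/
noncomputable def monicReduction : MonicLocalization A →+* ResidueFunctionField A :=
  IsLocalization.lift (M := monicSubmonoid A) isUnit_reduction_of_monic

@[simp]
theorem monicReduction_algebraMap (p : A[X]) :
    monicReduction A (algebraMap _ _ p) = reduction A p :=
  IsLocalization.lift_eq _ _

theorem isUnit_of_mem_regularAtInfinity {c : MonicLocalization A} (hc : c ∈ regularAtInfinity A)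
    (hc1 : monicReduction A c = 1) : IsUnit c := by
  obtain ⟨p, g, hg, hdeg, hcg⟩ := mem_regularAtInfinity.1 hc
  have hpg : p.map (residue A) = g.map (residue A) := by
    refine FaithfulSMul.algebraMap_injective (ResidueField A)[X] (ResidueFunctionField A) ?_
    have h := congrArg (monicReduction A) hcg
    rwa [map_mul, hc1, one_mul, monicReduction_algebraMap, monicReduction_algebraMap,
      eq_comm] at h
  have hlead : IsUnit (p.coeff g.natDegree) := by
    refine isUnit_of_map_unit (residue A) _ ?_
    rw [← Polynomial.coeff_map, hpg, Polynomial.coeff_map, hg.coeff_natDegree, map_one]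
    exact isUnit_one
  obtain ⟨u, hu⟩ := hlead
  have hmonic : (Polynomial.C (↑u⁻¹ : A) * p).Monic := by
    refine monic_of_natDegree_le_of_coeff_eq_one g.natDegree
      ((natDegree_C_mul_le _ _).trans hdeg) ?_
    rw [Polynomial.coeff_C_mul, ← hu, Units.inv_mul]
  refine isUnit_of_mul_isUnit_left (y := algebraMap _ _ g) ?_
  rw [hcg]
  exact isUnit_algebraMap_monicLocalization_iff.2 ⟨_, hmonic, dvd_mul_left _ _⟩

variable {n : Type*} [Fintype n] [DecidableEq n]

theorem exists_map_mul_mem_regularAtInfinity {W : Matrix n n (MonicLocalization A)}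
    (hW : IsUnit W.det) (hres : W.map (monicReduction A) = 1) :
    ∃ Y : Matrix n n A[X], Y.map (mapRingHom (residue A)) = 1 ∧
      ∀ i j, (Y.map (algebraMap A[X] (MonicLocalization A)) * W) i j ∈ regularAtInfinity A := by
  obtain ⟨g, W', hg, hW'⟩ := exists_monic_smul_eq_map W
  obtain ⟨g₂, W₂, hg₂, hW₂⟩ := exists_monic_smul_eq_map W⁻¹
  have hWW : W₂ * W' = (g * g₂) • 1 := by
    refine Matrix.map_injective (algebraMap_monicLocalization_injective A) ?_
    change (W₂ * W').map _ = ((g * g₂) • (1 : Matrix n n A[X])).map _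
    rw [Matrix.map_mul, hW', hW₂, Matrix.smul_mul, Matrix.mul_smul, nonsing_inv_mul _ hW,
      Matrix.map_smul' _ _ _ (map_mul _), Matrix.map_one _ (map_zero _) (map_one _), smul_smul,
      map_mul, mul_comm]
  have hred : W'.map (mapRingHom (residue A)) = g.map (residue A) • 1 := by
    refine Matrix.map_injective
      (FaithfulSMul.algebraMap_injective (ResidueField A)[X] (ResidueFunctionField A)) ?_
    have h : W'.map (reduction A) = reduction A g • 1 := by
      rw [← hres, ← monicReduction_algebraMap g, ← Matrix.map_smul' _ _ _ (map_mul _), ← hW']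
      exact Matrix.ext fun i j => (monicReduction_algebraMap (W' i j)).symm
    change W'.map (reduction A) = (g.map (residue A) • (1 : Matrix n n _)).map _
    rw [h, Matrix.map_smul' _ _ _ (map_mul _), Matrix.map_one _ (map_zero _) (map_one _)]
    rfl
  obtain ⟨Y, hY, hdeg⟩ := exists_map_residue_eq_one_natDegree_mul_le hg hg₂ hWW hred
  refine ⟨Y, hY, fun i j => ⟨(Y * W') i j, g, hg, hdeg i j, ?_⟩⟩
  have hYW : (Y * W').map (algebraMap _ (MonicLocalization A)) =
      algebraMap _ (MonicLocalization A) g • (Y.map (algebraMap _ _) * W) := by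
    rw [Matrix.map_mul, hW', Matrix.mul_smul]
  rw [mul_comm]
  exact (congrFun₂ hYW i j).symm

theorem exists_isUnit_det_map_mul_mem_regularAtInfinity [IsDomain A]
    {W : Matrix n n (MonicLocalization A)} (hW : IsUnit W.det)
    (hres : W.map (monicReduction A) = 1) :
    ∃ Y : Matrix n n A[X], IsUnit Y.det ∧
      ∀ i j, (Y.map (algebraMap A[X] (MonicLocalization A)) * W) i j ∈ regularAtInfinity A := by
  obtain ⟨Y, hY, hmem⟩ := exists_map_mul_mem_regularAtInfinity hW hres
  refine ⟨Y, ?_, hmem⟩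
  have hYdet : Y.det.map (residue A) = 1 := by
    rw [← coe_mapRingHom, RingHom.map_det, RingHom.mapMatrix_apply, hY, Matrix.det_one]
  have hunit : IsUnit (Y.map (algebraMap _ (MonicLocalization A)) * W).det := by
    refine isUnit_of_mem_regularAtInfinity (det_mem_of_forall_mem _ hmem) ?_
    rw [Matrix.det_mul, map_mul, RingHom.map_det (monicReduction A) W, RingHom.mapMatrix_apply,
      hres, Matrix.det_one, mul_one, ← RingHom.mapMatrix_apply, ← RingHom.map_det,
      monicReduction_algebraMap, reduction, RingHom.comp_apply, coe_mapRingHom, hYdet, map_one]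
  rw [Matrix.det_mul, IsUnit.mul_iff, ← RingHom.mapMatrix_apply, ← RingHom.map_det,
    isUnit_algebraMap_monicLocalization_iff] at hunit
  obtain ⟨g, hg, hYg⟩ := hunit.1
  exact isUnit_of_dvd_monic_of_map_residue_eq_one hg hYg hYdet

end Infinity

section BlockChain

variable {C κ ι β : Type*} [CommRing C] [LinearOrder β]

/-- A family `s` arranged in blocks, `b i` being the label of the block of `i`: the family is
constant on blocks, and the value on a later block is that on an earlier one times an element of
the ideal `I`. -/
structure IsBlockChain (b : ι → β) (I : Ideal C) (s : ι → C) : Prop where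
  eq_of_eq : ∀ {i j}, b i = b j → s i = s j
  exists_eq_mul : ∀ {i j}, b i < b j → ∃ ρ ∈ I, s j = s i * ρ

variable [Fintype ι] [DecidableEq ι] {b : ι → β}

theorem isUnit_det_iff_of_blockTriangular {M : Matrix ι ι C} (hM : M.BlockTriangular b) :
    IsUnit M.det ↔ ∀ a, IsUnit (M.toSquareBlock b a).det := by
  rw [hM.det, IsUnit.prod_iff]
  refine ⟨fun h a => ?_, fun h a _ => h a⟩
  by_cases ha : a ∈ Finset.univ.image b
  · exact h a ha
  · have : IsEmpty {i // b i = a} :=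
      ⟨fun i => ha (Finset.mem_image.2 ⟨i, Finset.mem_univ _, i.2⟩)⟩
    rw [det_isEmpty]
    exact isUnit_one

theorem isUnit_det_of_forall_block_eq {M P Q : Matrix ι ι C} (hM : M.BlockTriangular b)
    (hP : P.BlockTriangular b) (hQ : Q.BlockTriangular b) (hPdet : IsUnit P.det)
    (hQdet : IsUnit Q.det)
    (h : ∀ a, (∀ i j, b i = a → b j = a → M i j = P i j) ∨
      ∀ i j, b i = a → b j = a → M i j = Q i j) : IsUnit M.det := by
  refine (isUnit_det_iff_of_blockTriangular hM).2 fun a => ?_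
  rcases h a with h | h
  · rw [show M.toSquareBlock b a = P.toSquareBlock b a from
      Matrix.ext fun i j => h i j i.2 j.2]
    exact (isUnit_det_iff_of_blockTriangular hP).1 hPdet a
  · rw [show M.toSquareBlock b a = Q.toSquareBlock b a from
      Matrix.ext fun i j => h i j i.2 j.2]
    exact (isUnit_det_iff_of_blockTriangular hQ).1 hQdet a

theorem exists_isUnit_det_map_eq_of_fintype {D : Type*} [EuclideanDomain D] {q : C →+* D}
    (hq : Function.Surjective q) (hunit : ∀ d : D, IsUnit d → ∃ c : C, IsUnit c ∧ q c = d)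
    {M : Matrix ι ι D} (hM : IsUnit M.det) : ∃ M' : Matrix ι ι C, IsUnit M'.det ∧ M'.map q = M := by
  let e := Fintype.equivFin ι
  obtain ⟨M', hM', hmap⟩ := exists_isUnit_det_map_eq hq hunit (M := M.submatrix e.symm e.symm)
    (by rwa [det_submatrix_equiv_self])
  refine ⟨M'.submatrix e e, by rwa [det_submatrix_equiv_self], ?_⟩
  rw [← Matrix.submatrix_map, hmap, submatrix_submatrix, e.symm_comp_self, submatrix_id_id]

theorem exists_blockTriangular_map_eq {D : Type*} [EuclideanDomain D] {q : C →+* D}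
    (hq : Function.Surjective q) (hunit : ∀ d : D, IsUnit d → ∃ c : C, IsUnit c ∧ q c = d)
    {M : Matrix ι ι D} (hMb : M.BlockTriangular b) (hM : IsUnit M.det) :
    ∃ M' : Matrix ι ι C, M'.BlockTriangular b ∧ IsUnit M'.det ∧ M'.map q = M := by
  have hblock (a : β) := exists_isUnit_det_map_eq_of_fintype hq hunit
    ((isUnit_det_iff_of_blockTriangular hMb).1 hM a)
  choose L hL hLmap using hblock
  choose lift hlift using hq
  let M' : Matrix ι ι C := Matrix.of fun i j =>
    if h : b j = b i then L (b i) ⟨i, rfl⟩ ⟨j, h⟩ else if b i < b j then lift (M i j) else 0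
  have hM'b : M'.BlockTriangular b := fun i j hij => by simp [M', hij.ne, hij.not_gt]
  refine ⟨M', hM'b, (isUnit_det_iff_of_blockTriangular hM'b).2 fun a => ?_,
    Matrix.ext fun i j => ?_⟩
  · have hM'L : M'.toSquareBlock b a = L a := by
      ext ⟨i, rfl⟩ ⟨j, hj⟩
      simp [M', toSquareBlock_def, hj]
    rw [hM'L]
    exact hL a
  · rcases lt_trichotomy (b i) (b j) with hij | hij | hij
    · simp [M', hij, hij.ne', hlift]
    · simp only [M', map_apply, of_apply, hij.symm, dif_pos]
      exact congrFun₂ (hLmap (b i)) ⟨i, rfl⟩ ⟨j, hij.symm⟩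
    · simp [M', hij.ne, hij.not_gt, hMb hij]

/-- The pair `(σ, τ)` is the image under `res` of a pair of invertible matrices intertwining the
diagonal matrix with entries `s`. -/
def LiftsToIntertwiner [CommRing κ] (res : C →+* κ) (s : ι → C) (σ τ : Matrix ι ι κ) : Prop :=
  ∃ σ' τ' : Matrix ι ι C, IsUnit σ'.det ∧ IsUnit τ'.det ∧
    σ' * diagonal s = diagonal s * τ' ∧ σ'.map res = σ ∧ τ'.map res = τ

theorem inv_apply_eq_zero_of_ne {M : Matrix ι ι C} (hM : ∀ i j, b i ≠ b j → M i j = 0)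
    (hdet : IsUnit M.det) (i j : ι) (hij : b i ≠ b j) : M⁻¹ i j = 0 := by
  have := invertibleOfIsUnitDet M hdet
  rcases hij.lt_or_gt with h | h
  · have hb : M.BlockTriangular (OrderDual.toDual ∘ b) := fun i j hij => hM i j (ne_of_lt hij)
    exact blockTriangular_inv_of_blockTriangular hb h
  · have hb : M.BlockTriangular b := fun i j hij => hM i j (ne_of_gt hij)
    exact blockTriangular_inv_of_blockTriangular hb h

theorem IsBlockChain.exists_mul_diagonal_eq_diagonal_mul {I : Ideal C} {s : ι → C}
    (hs : IsBlockChain b I s) {σ τ₀ : Matrix ι ι C} (hσb : σ.BlockTriangular b)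
    (hτ₀b : τ₀.BlockTriangular b) (hσ : IsUnit σ.det) (hτ₀ : IsUnit τ₀.det) :
    ∃ τ : Matrix ι ι C, IsUnit τ.det ∧ σ * diagonal s = diagonal s * τ ∧
      (∀ i j, b i ≠ b j → τ i j ∈ I) ∧
      ∀ i j, b i = b j → (s i = 0 → τ i j = τ₀ i j) ∧ (s i ≠ 0 → τ i j = σ i j) := by
  classical
  have hratio (i j : ι) : ∃ ρ, b i < b j → ρ ∈ I ∧ s j = s i * ρ := by
    by_cases hij : b i < b j
    · obtain ⟨ρ, hρ, h⟩ := hs.exists_eq_mul hij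
      exact ⟨ρ, fun _ => ⟨hρ, h⟩⟩
    · exact ⟨0, fun h => absurd h hij⟩
  choose ρ hρ using hratio
  let τ : Matrix ι ι C := Matrix.of fun i j =>
    if b i < b j then ρ i j * σ i j else if s i = 0 then τ₀ i j else σ i j
  have hτb : τ.BlockTriangular b := fun i j hij => by
    simp [τ, hij.not_gt, hτ₀b hij, hσb hij]
  have hblock (i j : ι) (hij : b i = b j) :
      (s i = 0 → τ i j = τ₀ i j) ∧ (s i ≠ 0 → τ i j = σ i j) := by
    simp +contextual [τ, hij.not_lt]
  refine ⟨τ, isUnit_det_of_forall_block_eq hτb hτ₀b hσb hτ₀ hσ fun a => ?_,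
    Matrix.ext fun i j => ?_, fun i j hij => ?_, hblock⟩
  · by_cases h0 : ∃ i, b i = a ∧ s i = 0
    · obtain ⟨i₀, rfl, h0⟩ := h0
      exact .inl fun i j hi hj => (hblock i j (hi.trans hj.symm)).1 ((hs.eq_of_eq hi).trans h0)
    · push Not at h0
      exact .inr fun i j hi hj => (hblock i j (hi.trans hj.symm)).2 (h0 i hi)
  · rw [mul_diagonal, diagonal_mul]
    rcases lt_trichotomy (b i) (b j) with hij | hij | hij
    · simp only [τ, of_apply, if_pos hij, (hρ i j hij).2]
      ring
    · rw [← hs.eq_of_eq hij, mul_comm]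
      by_cases h0 : s i = 0
      · rw [h0, zero_mul, zero_mul]
      · rw [(hblock i j hij).2 h0]
    · rw [hσb hij, hτb hij, zero_mul, mul_zero]
  · rcases hij.lt_or_gt with hij | hij
    · simpa only [τ, of_apply, if_pos hij] using I.mul_mem_right _ (hρ i j hij).1
    · exact hτb hij ▸ I.zero_mem

theorem exists_blockDiagonal_inv_mul_eq_one {τ : Matrix ι ι C} (hτ : IsUnit τ.det)
    (hτb : τᵀ.BlockTriangular b) :
    ∃ D : Matrix ι ι C, IsUnit D.det ∧ (∀ i j, b i ≠ b j → D i j = 0) ∧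
      (∀ i j, b i = b j → D i j = τ i j) ∧
      ∀ i j, b i ≤ b j → (D⁻¹ * τ) i j = (1 : Matrix ι ι C) i j := by
  let D : Matrix ι ι C := Matrix.of fun i j => if b i = b j then τ i j else 0
  have hDb (i j : ι) (hij : b i ≠ b j) : D i j = 0 := if_neg hij
  have hDt : Dᵀ.BlockTriangular b := fun i j hij => hDb j i hij.ne
  have hD : IsUnit D.det := by
    have hblock (a : β) : Dᵀ.toSquareBlock b a = τᵀ.toSquareBlock b a :=
      Matrix.ext fun ⟨i, hi⟩ ⟨j, hj⟩ => if_pos (hj.trans hi.symm)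
    rw [← det_transpose, isUnit_det_iff_of_blockTriangular hDt]
    intro a
    rw [hblock]
    exact (isUnit_det_iff_of_blockTriangular hτb).1 (by rwa [det_transpose]) a
  refine ⟨D, hD, hDb, fun i j hij => if_pos hij, fun i j hij => ?_⟩
  rw [← sub_eq_zero, ← Matrix.sub_apply, ← nonsing_inv_mul D hD, ← Matrix.mul_sub, mul_apply]
  refine Finset.sum_eq_zero fun k _ => ?_
  by_cases hik : b i = b k
  · rcases (hik ▸ hij : b k ≤ b j).lt_or_eq with hkj | hkj
    · rw [Matrix.sub_apply, hDb k j hkj.ne, show τ k j = 0 from hτb hkj, sub_zero, mul_zero]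
    · rw [Matrix.sub_apply, show D k j = τ k j from if_pos hkj, sub_self, mul_zero]
  · rw [inv_apply_eq_zero_of_ne hDb hD i k hik, zero_mul]

namespace LiftsToIntertwiner

theorem mul [CommRing κ] {res : C →+* κ} {s : ι → C} {σ₁ τ₁ σ₂ τ₂ : Matrix ι ι κ}
    (h₁ : LiftsToIntertwiner res s σ₁ τ₁) (h₂ : LiftsToIntertwiner res s σ₂ τ₂) :
    LiftsToIntertwiner res s (σ₁ * σ₂) (τ₁ * τ₂) := by
  obtain ⟨σ₁, τ₁, hσ₁, hτ₁, h₁, rfl, rfl⟩ := h₁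
  obtain ⟨σ₂, τ₂, hσ₂, hτ₂, h₂, rfl, rfl⟩ := h₂
  refine ⟨σ₁ * σ₂, τ₁ * τ₂, ?_, ?_, ?_, Matrix.map_mul, Matrix.map_mul⟩
  · rw [det_mul]
    exact hσ₁.mul hσ₂
  · rw [det_mul]
    exact hτ₁.mul hτ₂
  · rw [Matrix.mul_assoc, h₂, ← Matrix.mul_assoc, h₁, Matrix.mul_assoc]

theorem transpose [CommRing κ] {res : C →+* κ} {s : ι → C} {σ τ : Matrix ι ι κ}
    (h : LiftsToIntertwiner res s σ τ) : LiftsToIntertwiner res s τᵀ σᵀ := by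
  obtain ⟨σ, τ, hσ, hτ, h, rfl, rfl⟩ := h
  refine ⟨τᵀ, σᵀ, by rwa [det_transpose], by rwa [det_transpose], ?_, rfl, rfl⟩
  rw [← diagonal_transpose, ← transpose_mul, ← h, transpose_mul]

variable [Field κ] {res : C →+* κ} {s : ι → C} {σ τ : Matrix ι ι κ}

theorem of_blockTriangular (hres : Function.Surjective res)
    (hunit : ∀ d : κ, IsUnit d → ∃ c : C, IsUnit c ∧ res c = d)
    (hs : IsBlockChain b (RingHom.ker res) s) (hσ : IsUnit σ.det) (hτ : IsUnit τ.det)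
    (hσb : σ.BlockTriangular b) (hτb : ∀ i j, b i ≠ b j → τ i j = 0)
    (hστ : ∀ i j, b i = b j → s i ≠ 0 → σ i j = τ i j) : LiftsToIntertwiner res s σ τ := by
  obtain ⟨σ', hσ'b, hσ', rfl⟩ := exists_blockTriangular_map_eq hres hunit hσb hσ
  obtain ⟨τ₀, hτ₀b, hτ₀, rfl⟩ :=
    exists_blockTriangular_map_eq hres hunit (fun i j hij => hτb i j hij.ne') hτ
  obtain ⟨τ', hτ', hcomm, hoff, hblock⟩ :=
    hs.exists_mul_diagonal_eq_diagonal_mul hσ'b hτ₀b hσ' hτ₀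
  refine ⟨σ', τ', hσ', hτ', hcomm, rfl, Matrix.ext fun i j => ?_⟩
  by_cases hij : b i = b j
  · by_cases h0 : s i = 0
    · rw [map_apply, map_apply, (hblock i j hij).1 h0]
    · rw [map_apply, (hblock i j hij).2 h0]
      exact hστ i j hij h0
  · rw [hτb i j hij]
    exact hoff i j hij

theorem of_blockTriangular_transpose (hres : Function.Surjective res)
    (hunit : ∀ d : κ, IsUnit d → ∃ c : C, IsUnit c ∧ res c = d)
    (hs : IsBlockChain b (RingHom.ker res) s) (hσ : IsUnit σ.det) (hτ : IsUnit τ.det)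
    (hσb : σ.BlockTriangular b) (hτb : τᵀ.BlockTriangular b)
    (hστ : ∀ i j, b i = b j → s i ≠ 0 → σ i j = τ i j) : LiftsToIntertwiner res s σ τ := by
  obtain ⟨D, hD, hDb, hDτ, hT⟩ := exists_blockDiagonal_inv_mul_eq_one hτ hτb
  have h₁ : LiftsToIntertwiner res s σ D :=
    of_blockTriangular hres hunit hs hσ hD hσb hDb fun i j hij h0 =>
      (hστ i j hij h0).trans (hDτ i j hij).symm
  have h₂ : LiftsToIntertwiner res s (D⁻¹ * τ)ᵀ 1 := by
    refine of_blockTriangular (b := b) hres hunit hs ?_ ?_ (fun i j hij => ?_)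
      (fun i j hij => one_apply_ne (ne_of_apply_ne b hij)) fun i j hij _ => ?_
    · rw [det_transpose, det_mul]
      exact (isUnit_nonsing_inv_det _ hD).mul hτ
    · rw [det_one]
      exact isUnit_one
    · rw [transpose_apply, hT j i hij.le, one_apply_ne (ne_of_apply_ne b hij.ne)]
    · rw [transpose_apply, hT j i hij.ge, one_apply, one_apply]
      simp only [eq_comm]
  have h := h₁.mul h₂.transpose
  rwa [transpose_one, transpose_transpose, Matrix.mul_one,
    mul_nonsing_inv_cancel_left _ _ hD] at h

end LiftsToIntertwiner

end BlockChain

section Horrocks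

open Polynomial IsLocalRing

namespace IsBlockChain

variable {L κ ι β : Type*} [CommRing L] [CommRing κ] [LinearOrder β] {b : ι → β} {s : ι → L}

theorem map {I : Ideal L} (hs : IsBlockChain b I s) (f : L →+* κ) {J : Ideal κ}
    (hIJ : I ≤ J.comap f) : IsBlockChain b J fun i => f (s i) where
  eq_of_eq hij := congrArg f (hs.eq_of_eq hij)
  exists_eq_mul hij := by
    obtain ⟨ρ, hρ, h⟩ := hs.exists_eq_mul hij
    exact ⟨f ρ, hIJ hρ, by rw [h, map_mul]⟩

variable [IsDomain L] [Fintype ι] [DecidableEq ι] {res : L →+* κ} {σ τ : Matrix ι ι L}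

theorem blockTriangular_map (hs : IsBlockChain b (RingHom.ker res) s)
    (hs0 : ∀ i j, b i < b j → s i ≠ 0) (h : σ * diagonal s = diagonal s * τ) :
    (σ.map res).BlockTriangular b := by
  intro i j hij
  obtain ⟨ρ, hρ, hsρ⟩ := hs.exists_eq_mul hij
  have hentry := congrFun₂ h i j
  rw [mul_diagonal, diagonal_mul, hsρ, mul_comm, mul_assoc] at hentry
  rw [map_apply, mul_left_cancel₀ (hs0 j i hij) hentry, map_mul, RingHom.mem_ker.1 hρ, zero_mul]

theorem blockTriangular_map_transpose (hs : IsBlockChain b (RingHom.ker res) s)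
    (hs0 : ∀ i j, b i < b j → s i ≠ 0) (h : σ * diagonal s = diagonal s * τ) :
    (τ.map res)ᵀ.BlockTriangular b := by
  refine hs.blockTriangular_map (σ := τᵀ) (τ := σᵀ) hs0 ?_
  rw [← diagonal_transpose, ← transpose_mul, ← h, transpose_mul]

theorem apply_eq_apply {I : Ideal L} (hs : IsBlockChain b I s)
    (h : σ * diagonal s = diagonal s * τ) {i j : ι} (hij : b i = b j) (hi : s i ≠ 0) :
    σ i j = τ i j := by
  have hentry := congrFun₂ h i j
  rw [mul_diagonal, diagonal_mul, ← hs.eq_of_eq hij, mul_comm] at hentry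
  exact mul_left_cancel₀ hi hentry

end IsBlockChain

theorem DvdChain.exists_isBlockChain {A : Type*} [CommRing A] [IsLocalRing A] {N : ℕ}
    {Φ : Fin N → A} (hΦ : DvdChain Φ) :
    ∃ (b : Fin N → Fin N) (s : Fin N → A), IsBlockChain b (maximalIdeal A) s ∧
      (∀ i j, b i < b j → s i ≠ 0) ∧ ∀ i, Associated (Φ i) (s i) := by
  have hfirst (i : Fin N) : ∃ a, Associated (Φ a) (Φ i) ∧ ∀ j, Associated (Φ j) (Φ i) → a ≤ j := by
    obtain ⟨a, ha, hmin⟩ := wellFounded_lt.has_min {a | Associated (Φ a) (Φ i)} ⟨i, .rfl⟩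
    exact ⟨a, ha, fun j hj => not_lt.1 (hmin j hj)⟩
  choose b hb hmin using hfirst
  have not_associated {i j : Fin N} (hij : b i < b j) : ¬ Associated (Φ (b i)) (Φ (b j)) :=
    fun h => hij.not_ge (hmin j _ (h.trans (hb j)))
  refine ⟨b, fun i => Φ (b i), ⟨fun hij => congrArg Φ hij, fun {i j} hij => ?_⟩,
    fun i j hij h0 => ?_, fun i => (hb i).symm⟩
  · obtain ⟨ρ, hρ⟩ := hΦ _ _ hij.le
    refine ⟨ρ, (mem_maximalIdeal ρ).2 fun hunit => not_associated hij ⟨hunit.unit, hρ.symm⟩, hρ⟩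
  · refine not_associated hij ?_
    have hdvd := hΦ _ _ hij.le
    rw [show Φ (b i) = 0 from h0, zero_dvd_iff] at hdvd
    rw [show Φ (b i) = 0 from h0, hdvd]

variable (A : Type*) [CommRing A] [IsLocalRing A]

/-- The polynomials whose reduction modulo the maximal ideal of `A` is a unit. -/
noncomputable def unitReductionSubmonoid : Submonoid A[X] :=
  (IsUnit.submonoid _).comap (mapRingHom (residue A))

/-- The polynomials whose reduction modulo the maximal ideal of `A` is nonzero. -/
noncomputable def nonzeroReductionSubmonoid : Submonoid A[X] :=
  (nonZeroDivisors _).comap (mapRingHom (residue A))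

/-- The ring `A[x]` with all polynomials of unit reduction inverted; it reduces to `k[x]`. -/
abbrev UnitReductionLocalization : Type _ :=
  Localization (unitReductionSubmonoid A)

/-- The ring `A[x]` with all polynomials of nonzero reduction inverted; it reduces to `k(x)`, and
contains `MonicLocalization A` and `UnitReductionLocalization A` when `A` is a domain. -/
abbrev NonzeroReductionLocalization : Type _ :=
  Localization (nonzeroReductionSubmonoid A)

variable {A} in
theorem mem_nonzeroReductionSubmonoid {p : A[X]} :
    p ∈ nonzeroReductionSubmonoid A ↔ p.map (residue A) ≠ 0 :=
  mem_nonZeroDivisors_iff_ne_zero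

theorem unitReductionSubmonoid_le : unitReductionSubmonoid A ≤ nonzeroReductionSubmonoid A :=
  fun _ hp => mem_nonzeroReductionSubmonoid.2 (IsUnit.ne_zero hp)

theorem monicSubmonoid_le : monicSubmonoid A ≤ nonzeroReductionSubmonoid A :=
  fun p hp => mem_nonzeroReductionSubmonoid.2 (Monic.map (p := p) (residue A) hp).ne_zero

theorem nonzeroReductionSubmonoid_le_nonZeroDivisors [IsDomain A] :
    nonzeroReductionSubmonoid A ≤ nonZeroDivisors A[X] := by
  refine fun p hp => mem_nonZeroDivisors_iff_ne_zero.2 ?_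
  rintro rfl
  exact mem_nonzeroReductionSubmonoid.1 hp (Polynomial.map_zero _)

instance [IsDomain A] : IsDomain (UnitReductionLocalization A) :=
  IsLocalization.isDomain_localization
    ((unitReductionSubmonoid_le A).trans (nonzeroReductionSubmonoid_le_nonZeroDivisors A))

instance [IsDomain A] : IsDomain (NonzeroReductionLocalization A) :=
  IsLocalization.isDomain_localization (nonzeroReductionSubmonoid_le_nonZeroDivisors A)

/-- The reduction map `UnitReductionLocalization A → k[x]`. -/
noncomputable def unitReduction : UnitReductionLocalization A →+* (ResidueField A)[X] :=
  IsLocalization.lift (M := unitReductionSubmonoid A) fun p => p.2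

/-- The reduction map `NonzeroReductionLocalization A → k(x)`. -/
noncomputable def nonzeroReduction :
    NonzeroReductionLocalization A →+* ResidueFunctionField A :=
  IsLocalization.lift (M := nonzeroReductionSubmonoid A) (g := reduction A) fun p =>
    isUnit_iff_ne_zero.2 fun hp => mem_nonzeroReductionSubmonoid.1 p.2 (reduction_eq_zero_iff.1 hp)

/-- The canonical map `UnitReductionLocalization A → NonzeroReductionLocalization A`. -/
noncomputable def unitReductionInclusion :
    UnitReductionLocalization A →+* NonzeroReductionLocalization A :=
  IsLocalization.map (T := nonzeroReductionSubmonoid A) _ (RingHom.id A[X])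
    (unitReductionSubmonoid_le A)

/-- The canonical map `MonicLocalization A → NonzeroReductionLocalization A`. -/
noncomputable def monicInclusion : MonicLocalization A →+* NonzeroReductionLocalization A :=
  IsLocalization.map (T := nonzeroReductionSubmonoid A) _ (RingHom.id A[X]) (monicSubmonoid_le A)

variable {A}

@[simp]
theorem unitReduction_algebraMap (p : A[X]) :
    unitReduction A (algebraMap _ _ p) = p.map (residue A) :=
  IsLocalization.lift_eq _ _

@[simp]
theorem nonzeroReduction_algebraMap (p : A[X]) :
    nonzeroReduction A (algebraMap _ _ p) = reduction A p :=
  IsLocalization.lift_eq _ _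

@[simp]
theorem unitReductionInclusion_algebraMap (p : A[X]) :
    unitReductionInclusion A (algebraMap _ _ p) = algebraMap _ _ p :=
  IsLocalization.map_eq _ _

@[simp]
theorem monicInclusion_algebraMap (p : A[X]) :
    monicInclusion A (algebraMap _ _ p) = algebraMap _ _ p :=
  IsLocalization.map_eq _ _

theorem nonzeroReduction_comp_monicInclusion :
    (nonzeroReduction A).comp (monicInclusion A) = monicReduction A :=
  IsLocalization.ringHom_ext (monicSubmonoid A) (RingHom.ext fun p => by simp)

theorem nonzeroReduction_comp_unitReductionInclusion :
    (nonzeroReduction A).comp (unitReductionInclusion A) =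
      (algebraMap _ (ResidueFunctionField A)).comp (unitReduction A) :=
  IsLocalization.ringHom_ext (unitReductionSubmonoid A)
    (RingHom.ext fun p => by simp [reduction])

theorem reduction_C_eq_zero {ρ : A} (hρ : ρ ∈ maximalIdeal A) :
    reduction A (Polynomial.C ρ) = 0 := by
  rw [reduction_eq_zero_iff, Polynomial.map_C, (residue_eq_zero_iff ρ).2 hρ, Polynomial.C_0]

theorem map_residue_surjective : Function.Surjective (mapRingHom (residue A)) :=
  Polynomial.map_surjective _ residue_surjective

theorem unitReduction_surjective : Function.Surjective (unitReduction A) := fun p => by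
  obtain ⟨p, rfl⟩ := map_residue_surjective p
  exact ⟨algebraMap _ _ p, unitReduction_algebraMap p⟩

instance : IsLocalHom (unitReduction A) where
  map_nonunit x hx := by
    obtain ⟨⟨p, s⟩, hs⟩ := IsLocalization.surj (unitReductionSubmonoid A) x
    have hp : p ∈ unitReductionSubmonoid A := by
      change IsUnit (p.map (residue A))
      rw [← unitReduction_algebraMap, ← hs, map_mul, unitReduction_algebraMap]
      exact hx.mul s.2
    refine isUnit_of_mul_isUnit_left (y := algebraMap _ _ (s : A[X])) ?_
    rw [hs]
    exact IsLocalization.map_units (UnitReductionLocalization A)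
      (⟨p, hp⟩ : unitReductionSubmonoid A)

theorem exists_isUnit_map_residue_eq (d : (ResidueField A)[X]) (hd : IsUnit d) :
    ∃ p : A[X], IsUnit p ∧ mapRingHom (residue A) p = d := by
  obtain ⟨c, hc, rfl⟩ := Polynomial.isUnit_iff.1 hd
  obtain ⟨a, rfl⟩ := residue_surjective c
  exact ⟨Polynomial.C a, (isUnit_of_map_unit _ _ hc).map _, Polynomial.map_C _⟩

theorem exists_monic_map_residue_eq {p : (ResidueField A)[X]} (hp : p ≠ 0) :
    ∃ (u : A) (g : A[X]), IsUnit u ∧ g.Monic ∧ (Polynomial.C u * g).map (residue A) = p := by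
  obtain ⟨u, hu⟩ := residue_surjective p.leadingCoeff
  have hlead : p.leadingCoeff ≠ 0 := leadingCoeff_ne_zero.2 hp
  obtain ⟨g, hg, -, hmonic⟩ := lifts_and_degree_eq_and_monic
    (Polynomial.map_surjective _ residue_surjective (p * Polynomial.C p.leadingCoeff⁻¹))
    (monic_mul_leadingCoeff_inv hp)
  refine ⟨u, g, isUnit_of_map_unit (residue A) u (hu ▸ hlead.isUnit), hmonic, ?_⟩
  rw [Polynomial.map_mul, Polynomial.map_C, hg, hu, mul_left_comm, ← Polynomial.C_mul,
    mul_inv_cancel₀ hlead, Polynomial.C_1, mul_one]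

theorem exists_isUnit_monicReduction_eq_algebraMap {p : (ResidueField A)[X]} (hp : p ≠ 0) :
    ∃ c, IsUnit c ∧ monicReduction A c = algebraMap _ _ p := by
  obtain ⟨u, g, hu, hg, rfl⟩ := exists_monic_map_residue_eq hp
  refine ⟨algebraMap _ _ (Polynomial.C u * g), ?_, monicReduction_algebraMap _⟩
  rw [map_mul]
  exact ((hu.map _).map _).mul
    (IsLocalization.map_units (MonicLocalization A) (⟨g, hg⟩ : monicSubmonoid A))

theorem exists_isUnit_monicReduction_eq (z : ResidueFunctionField A) (hz : IsUnit z) :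
    ∃ c, IsUnit c ∧ monicReduction A c = z := by
  obtain ⟨p, g, hg, rfl⟩ := IsFractionRing.div_surjective (A := (ResidueField A)[X]) z
  obtain ⟨c, hc, hcg⟩ := exists_isUnit_monicReduction_eq_algebraMap (nonZeroDivisors.ne_zero hg)
  have hp : p ≠ 0 := by
    rintro rfl
    simp at hz
  obtain ⟨d, hd, hdp⟩ := exists_isUnit_monicReduction_eq_algebraMap hp
  refine ⟨d * ↑hc.unit⁻¹, hd.mul (Units.isUnit _), ?_⟩
  have hcinv : monicReduction A c * monicReduction A ↑hc.unit⁻¹ = 1 := by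
    rw [← map_mul, hc.mul_val_inv, map_one]
  rw [map_mul, hdp, div_eq_mul_inv, ← hcg, eq_inv_of_mul_eq_one_right hcinv]

theorem monicReduction_surjective : Function.Surjective (monicReduction A) := fun z => by
  rcases eq_or_ne z 0 with rfl | hz
  · exact ⟨0, map_zero _⟩
  · obtain ⟨c, -, hc⟩ := exists_isUnit_monicReduction_eq z hz.isUnit
    exact ⟨c, hc⟩

variable {N : ℕ} {F : Matrix (Fin N) (Fin N) A[X]} {s : Fin N → A}

theorem inv_mul_mul_eq_mul_mul_inv {R : Type*} [CommRing R]
    {U V U' V' D : Matrix (Fin N) (Fin N) R} (hU : IsUnit U.det) (hV' : IsUnit V'.det)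
    (h : U * D * V = U' * D * V') : U⁻¹ * U' * D = D * (V * V'⁻¹) :=
  calc
    U⁻¹ * U' * D = U⁻¹ * (U' * D * V') * V'⁻¹ := by
      rw [← Matrix.mul_assoc, mul_nonsing_inv_cancel_right _ _ hV', Matrix.mul_assoc]
    _ = D * (V * V'⁻¹) := by
      rw [← h, Matrix.mul_assoc U, nonsing_inv_mul_cancel_left _ _ hU, Matrix.mul_assoc]

theorem exists_intertwiner_map_nonzeroReduction
    {U V : Matrix (Fin N) (Fin N) (MonicLocalization A)} (hU : IsUnit U.det)
    (hF : F.map (algebraMap _ _) =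
      U * diagonal (fun i => algebraMap _ _ (Polynomial.C (s i))) * V)
    {U' V' : Matrix (Fin N) (Fin N) (UnitReductionLocalization A)} (hV' : IsUnit V'.det)
    (hF' : F.map (algebraMap _ _) =
      U' * diagonal (fun i => algebraMap _ _ (Polynomial.C (s i))) * V')
    (hqU' : U'.map (unitReduction A) = 1) (hqV' : V'.map (unitReduction A) = 1) :
    ∃ σ τ : Matrix (Fin N) (Fin N) (NonzeroReductionLocalization A),
      σ * diagonal (fun i => algebraMap _ _ (Polynomial.C (s i))) =
        diagonal (fun i => algebraMap _ _ (Polynomial.C (s i))) * τ ∧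
      σ.map (nonzeroReduction A) = (U.map (monicReduction A))⁻¹ ∧
      τ.map (nonzeroReduction A) = V.map (monicReduction A) := by
  have map_eq_one {M : Matrix (Fin N) (Fin N) (UnitReductionLocalization A)}
      (hM : M.map (unitReduction A) = 1) :
      (M.map (unitReductionInclusion A)).map (nonzeroReduction A) = 1 := by
    rw [map_map_ringHom, nonzeroReduction_comp_unitReductionInclusion, ← map_map_ringHom, hM,
      Matrix.map_one _ (map_zero _) (map_one _)]
  refine ⟨(U.map (monicInclusion A))⁻¹ * U'.map (unitReductionInclusion A),
    V.map (monicInclusion A) * (V'.map (unitReductionInclusion A))⁻¹,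
    inv_mul_mul_eq_mul_mul_inv (isUnit_det_map _ hU) (isUnit_det_map _ hV') ?_, ?_, ?_⟩
  · have h : (F.map (algebraMap _ _)).map (monicInclusion A) =
        (F.map (algebraMap _ _)).map (unitReductionInclusion A) := by
      ext i j
      simp
    simpa [hF, hF', Matrix.map_mul, diagonal_map, Function.comp_def] using h
  · rw [Matrix.map_mul, map_inv_of_isUnit_det _ (isUnit_det_map _ hU), map_eq_one hqU',
      map_map_ringHom, nonzeroReduction_comp_monicInclusion, Matrix.mul_one]
  · rw [Matrix.map_mul, map_inv_of_isUnit_det _ (isUnit_det_map _ hV'), map_eq_one hqV',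
      map_map_ringHom, nonzeroReduction_comp_monicInclusion, inv_one, Matrix.mul_one]

variable [IsDomain A]

theorem matEquiv_map_constPart_of_eq_mul_diagonal_mul
    {W₁ W₂ : Matrix (Fin N) (Fin N) (MonicLocalization A)}
    (hF : F.map (algebraMap _ _) =
      W₁ * diagonal (fun i => algebraMap _ _ (Polynomial.C (s i))) * W₂)
    (hW₁ : IsUnit W₁.det) (hW₂ : IsUnit W₂.det) (hres₁ : W₁.map (monicReduction A) = 1)
    (hres₂ : W₂.map (monicReduction A) = 1) : MatEquiv F (F.map constPart) := by
  obtain ⟨Y₁, hY₁, hreg₁⟩ := exists_isUnit_det_map_mul_mem_regularAtInfinity hW₁ hres₁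
  obtain ⟨Y₂, hY₂, hreg₂⟩ := exists_isUnit_det_map_mul_mem_regularAtInfinity (W := W₂ᵀ)
    (by rwa [det_transpose]) (by rw [transpose_map, hres₂, transpose_one])
  set Z := Y₁ * F * Y₂ᵀ with hZ
  have hfactor : Z.map (algebraMap _ (MonicLocalization A)) =
      Y₁.map (algebraMap _ _) * W₁ * diagonal (fun i => algebraMap _ _ (Polynomial.C (s i))) *
        (Y₂.map (algebraMap _ _) * W₂ᵀ)ᵀ := by
    rw [hZ, Matrix.map_mul, Matrix.map_mul, hF, transpose_mul, transpose_transpose,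
      ← transpose_map]
    simp only [Matrix.mul_assoc]
  have hconst (i j : Fin N) : ∃ a, Z i j = Polynomial.C a := by
    refine exists_eq_C_of_mem_regularAtInfinity ?_
    rw [← map_apply (f := algebraMap _ (MonicLocalization A)), hfactor, mul_apply]
    refine Subring.sum_mem _ fun k _ => Subring.mul_mem _ ?_ (hreg₂ _ _)
    rw [mul_diagonal]
    exact Subring.mul_mem _ (hreg₁ _ _) (algebraMap_C_mem_regularAtInfinity _)
  have hZ0 : Z.map constPart = Z := Matrix.ext fun i j => by
    obtain ⟨a, ha⟩ := hconst i j
    simp [ha, constPart]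
  have hZF : MatEquiv Z F := .of_mul hY₁ (by rwa [det_transpose])
  exact hZF.symm.trans (hZ0 ▸ hZF.map constPart)

theorem liftsToIntertwiner_monicReduction {b : Fin N → Fin N}
    (hs : IsBlockChain b (maximalIdeal A) s) (hs0 : ∀ i j, b i < b j → s i ≠ 0)
    {U V : Matrix (Fin N) (Fin N) (MonicLocalization A)} (hU : IsUnit U.det) (hV : IsUnit V.det)
    (hF : F.map (algebraMap _ _) =
      U * diagonal (fun i => algebraMap _ _ (Polynomial.C (s i))) * V)
    {U' V' : Matrix (Fin N) (Fin N) (UnitReductionLocalization A)} (hV' : IsUnit V'.det)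
    (hF' : F.map (algebraMap _ _) =
      U' * diagonal (fun i => algebraMap _ _ (Polynomial.C (s i))) * V')
    (hqU' : U'.map (unitReduction A) = 1) (hqV' : V'.map (unitReduction A) = 1) :
    LiftsToIntertwiner (monicReduction A) (fun i => algebraMap _ _ (Polynomial.C (s i)))
      (U.map (monicReduction A))⁻¹ (V.map (monicReduction A)) := by
  obtain ⟨σ, τ, hστ, hσ, hτ⟩ := exists_intertwiner_map_nonzeroReduction hU hF hV' hF' hqU' hqV'
  have hs_map : IsBlockChain b (RingHom.ker (nonzeroReduction A)) _ :=
    hs.map ((algebraMap _ _).comp Polynomial.C) fun ρ hρ => by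
      simp [RingHom.mem_ker, reduction_C_eq_zero hρ]
  have ne_zero {i : Fin N} (hi : s i ≠ 0) :
      algebraMap _ (NonzeroReductionLocalization A) (Polynomial.C (s i)) ≠ 0 :=
    (IsLocalization.to_map_eq_zero_iff _
      (nonzeroReductionSubmonoid_le_nonZeroDivisors A)).not.2 (Polynomial.C_ne_zero.2 hi)
  have hs_map0 (i j : Fin N) (hij : b i < b j) := ne_zero (hs0 i j hij)
  refine .of_blockTriangular_transpose (b := b) monicReduction_surjective
    exists_isUnit_monicReduction_eq ?_ (isUnit_nonsing_inv_det _ (isUnit_det_map _ hU))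
    (isUnit_det_map _ hV) (hσ ▸ hs_map.blockTriangular_map hs_map0 hστ)
    (hτ ▸ hs_map.blockTriangular_map_transpose hs_map0 hστ) fun i j hij hi => ?_
  · exact hs.map ((algebraMap _ _).comp Polynomial.C) fun ρ hρ => by
      simp [RingHom.mem_ker, reduction_C_eq_zero hρ]
  · have hi0 : s i ≠ 0 := fun h => hi (by rw [h, map_zero, map_zero])
    rw [← hσ, ← hτ, map_apply, map_apply, hs_map.apply_eq_apply hστ hij (ne_zero hi0)]

theorem matEquiv_map_constPart_of_unitReduction_eq_one {b : Fin N → Fin N}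
    (hs : IsBlockChain b (maximalIdeal A) s) (hs0 : ∀ i j, b i < b j → s i ≠ 0)
    (hF : MatEquiv (F.map (algebraMap _ (MonicLocalization A)))
      (diagonal fun i => algebraMap _ _ (Polynomial.C (s i))))
    {U' V' : Matrix (Fin N) (Fin N) (UnitReductionLocalization A)} (hV' : IsUnit V'.det)
    (hF' : F.map (algebraMap _ _) =
      U' * diagonal (fun i => algebraMap _ _ (Polynomial.C (s i))) * V')
    (hqU' : U'.map (unitReduction A) = 1) (hqV' : V'.map (unitReduction A) = 1) :
    MatEquiv F (F.map constPart) := by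
  obtain ⟨U, V, hU, hV, hUV⟩ := hF
  obtain ⟨σ, τ, hσ, hτ, hστ, hσU, hτV⟩ :=
    liftsToIntertwiner_monicReduction hs hs0 hU hV hUV hV' hF' hqU' hqV'
  refine matEquiv_map_constPart_of_eq_mul_diagonal_mul (s := s) (W₁ := U * σ) (W₂ := τ⁻¹ * V)
    ?_ ?_ ?_ ?_ ?_
  · rw [hUV, Matrix.mul_assoc U σ, hστ, ← Matrix.mul_assoc U, ← Matrix.mul_assoc _ τ⁻¹,
      mul_nonsing_inv_cancel_right _ _ hτ]
  · rw [det_mul]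
    exact hU.mul hσ
  · rw [det_mul]
    exact (isUnit_nonsing_inv_det _ hτ).mul hV
  · rw [Matrix.map_mul, hσU, mul_nonsing_inv _ (isUnit_det_map _ hU)]
  · rw [Matrix.map_mul, map_inv_of_isUnit_det _ hτ, hτV, nonsing_inv_mul _ (isUnit_det_map _ hV)]

theorem matEquiv_map_constPart_of_matEquiv_diagonal {b : Fin N → Fin N}
    (hs : IsBlockChain b (maximalIdeal A) s) (hs0 : ∀ i j, b i < b j → s i ≠ 0)
    (hF : MatEquiv (F.map (algebraMap _ (MonicLocalization A)))
      (diagonal fun i => algebraMap _ _ (Polynomial.C (s i))))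
    (hF' : MatEquiv (F.map (algebraMap _ (UnitReductionLocalization A)))
      (diagonal fun i => algebraMap _ _ (Polynomial.C (s i)))) :
    MatEquiv F (F.map constPart) := by
  obtain ⟨U, V, hU, hV, hUV⟩ := hF'
  obtain ⟨P, hP, hPU⟩ := exists_isUnit_det_map_eq map_residue_surjective
    exists_isUnit_map_residue_eq (isUnit_det_map (unitReduction A) hU)
  obtain ⟨Q, hQ, hQV⟩ := exists_isUnit_det_map_eq map_residue_surjective
    exists_isUnit_map_residue_eq (isUnit_det_map (unitReduction A) hV)
  have hP' := isUnit_nonsing_inv_det _ hP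
  have hQ' := isUnit_nonsing_inv_det _ hQ
  have hcomp : (unitReduction A).comp (algebraMap A[X] _) = mapRingHom (residue A) :=
    RingHom.ext unitReduction_algebraMap
  have hPQ : MatEquiv (P⁻¹ * F * Q⁻¹) F := .of_mul hP' hQ'
  have hconst : MatEquiv (P⁻¹ * F * Q⁻¹) ((P⁻¹ * F * Q⁻¹).map constPart) := by
    refine matEquiv_map_constPart_of_unitReduction_eq_one hs hs0 ((hPQ.map _).trans hF)
      (U' := P⁻¹.map (algebraMap _ _) * U) (V' := V * Q⁻¹.map (algebraMap _ _)) ?_ ?_ ?_ ?_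
    · rw [det_mul]
      exact hV.mul (isUnit_det_map _ hQ')
    · rw [Matrix.map_mul, Matrix.map_mul, hUV]
      simp only [Matrix.mul_assoc]
    · rw [Matrix.map_mul, map_map_ringHom, hcomp, map_inv_of_isUnit_det _ hP, hPU,
        nonsing_inv_mul _ (isUnit_det_map _ hU)]
    · rw [Matrix.map_mul, map_map_ringHom, hcomp, map_inv_of_isUnit_det _ hQ, hQV,
        mul_nonsing_inv _ (isUnit_det_map _ hV)]
  exact hPQ.symm.trans (hconst.trans (hPQ.map constPart))

theorem matEquiv_unitReductionLocalization_smithDiag {Φ : Fin N → A} (hΦ : DvdChain Φ)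
    (hF : ∀ k ≤ N, detIdeal F k = Ideal.span {Polynomial.C (initProd Φ k)}) :
    MatEquiv (F.map (algebraMap _ (UnitReductionLocalization A)))
      (smithDiag fun i => algebraMap _ _ (Polynomial.C (Φ i))) := by
  let c : A →+* UnitReductionLocalization A := (algebraMap _ _).comp Polynomial.C
  have hdet (k : ℕ) (hk : k ≤ N) :
      detIdeal (F.map (algebraMap _ (UnitReductionLocalization A))) k =
        Ideal.span {initProd (fun i => c (Φ i)) k} := by
    rw [detIdeal_map_eq_span _ (hF k hk), ← map_initProd]
    rfl
  obtain ⟨Ψ, hΨ⟩ := exists_isSmithForm_of_isLocalHom (unitReduction A) unitReduction_surjective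
    (F := F.map (algebraMap _ (UnitReductionLocalization A))) fun k => by
      by_cases hk : k ≤ N
      · exact ⟨_, hdet k hk⟩
      · exact ⟨0, by rw [detIdeal_eq_bot_of_lt _ (not_le.1 hk), Ideal.span_singleton_zero]⟩
  exact hΨ.matEquiv.trans (matEquiv_smithDiag_of_associated
    (hΨ.dvdChain.associated_of_span_initProd_eq (hΦ.map c) fun k hk =>
      (hΨ.detIdeal_eq k hk).symm.trans (hdet k hk)))

theorem matEquiv_map_constPart_of_monicLocalization {Φ : Fin N → A} (hΦ : DvdChain Φ)
    (hF : ∀ k ≤ N, detIdeal F k = Ideal.span {Polynomial.C (initProd Φ k)})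
    (hmonic : MatEquiv (F.map (algebraMap _ (MonicLocalization A)))
      (smithDiag fun i => algebraMap _ _ (Polynomial.C (Φ i)))) : MatEquiv F (F.map constPart) := by
  obtain ⟨b, s, hs, hs0, hΦs⟩ := hΦ.exists_isBlockChain
  have hassoc {R : Type _} [CommRing R] (f : A[X] →+* R) :
      MatEquiv (smithDiag fun i => f (Polynomial.C (Φ i)) : Matrix (Fin N) (Fin N) R)
        (diagonal fun i => f (Polynomial.C (s i))) := by
    rw [← smithDiag_eq_diagonal]
    exact matEquiv_smithDiag_of_associated fun i => ((hΦs i).map Polynomial.C).map f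
  exact matEquiv_map_constPart_of_matEquiv_diagonal hs hs0 (hmonic.trans (hassoc _))
    ((matEquiv_unitReductionLocalization_smithDiag hΦ hF).trans (hassoc _))

end Horrocks

section SmithOverConstants

open Polynomial

variable {A B D : Type*} [CommRing A] [CommRing B] [CommRing D] {l m : ℕ}

theorem IsSmithForm.map {F : Matrix (Fin l) (Fin m) A} {Φ : Fin l → A} (h : IsSmithForm F Φ)
    (f : A →+* B) : IsSmithForm (F.map f) fun i => f (Φ i) where
  dvdChain := h.dvdChain.map f
  matEquiv := smithDiag_map (m := m) f Φ ▸ h.matEquiv.map f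
  detIdeal_eq k hk := by rw [detIdeal_map_eq_span f (h.detIdeal_eq k hk), map_initProd]

theorem IsSmithForm.of_matEquiv {F G : Matrix (Fin l) (Fin m) A} {Φ : Fin l → A}
    (h : IsSmithForm G Φ) (hFG : MatEquiv F G) : IsSmithForm F Φ where
  dvdChain := h.dvdChain
  matEquiv := hFG.trans h.matEquiv
  detIdeal_eq k hk := (hFG.detIdeal_eq k).trans (h.detIdeal_eq k hk)

theorem detIdeal_two_eq_bot {F : Matrix (Fin l) (Fin m) A} {i₀ : Fin l}
    (hF : ∀ i ≠ i₀, F i = 0) : detIdeal F 2 = ⊥ := by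
  rw [eq_bot_iff, detIdeal_le_iff]
  intro r s
  rw [Submodule.mem_bot]
  by_cases h0 : r 0 = i₀
  · by_cases h1 : r 1 = i₀
    · exact det_zero_of_row_eq zero_ne_one (by ext; simp [h0, h1])
    · exact det_eq_zero_of_row_eq_zero 1 fun t => congrFun (hF _ h1) _
  · exact det_eq_zero_of_row_eq_zero 0 fun t => congrFun (hF _ h0) _

theorem IsSmithForm.eq_zero_of_detIdeal_succ_eq_bot [IsDomain A] {F : Matrix (Fin l) (Fin m) A}
    {Φ : Fin l → A} (h : IsSmithForm F Φ) {k : ℕ} (hF : detIdeal F (k + 1) = ⊥) {i : Fin l}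
    (hi : k ≤ i) : Φ i = 0 := by
  have hprod := h.detIdeal_eq (k + 1) (by lia)
  rw [hF, eq_comm, Ideal.span_singleton_eq_bot, initProd_eq_zero_iff] at hprod
  obtain ⟨j, hj, hΦj⟩ := hprod
  exact zero_dvd_iff.1 (hΦj ▸ h.dvdChain j i (Fin.le_def.2 ((Nat.le_of_lt_succ hj).trans hi)))

theorem IsSmithForm.isUnit_zero {F : Matrix (Fin (l + 1)) (Fin m) A} {Φ : Fin (l + 1) → A}
    (h : IsSmithForm F Φ) (hF : detIdeal F 1 = ⊤) : IsUnit (Φ 0) := by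
  have hprod : initProd Φ 1 = Φ 0 := by simpa using initProd_succ Φ 0
  rw [← hprod, ← Ideal.span_singleton_eq_top, ← h.detIdeal_eq 1 (Nat.le_add_left 1 l), hF]

/-- A square matrix over `A` whose determinantal ideals are generated by elements of the
coefficient ring `D`, embedded by `c`, has a Smith form with entries in `D`. -/
def SmithOverConstants (c : D →+* A) : Prop :=
  ∀ (N : ℕ) (F : Matrix (Fin N) (Fin N) A),
    (∀ k ≤ N, ∃ d, detIdeal F k = Ideal.span {c d}) →
      ∃ Φ : Fin N → D, IsSmithForm F fun i => c (Φ i)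

theorem smithOverConstants_id {D : Type*} [EuclideanDomain D] :
    SmithOverConstants (RingHom.id D) := fun N F hF =>
  exists_isSmithForm_of_isLocalHom (RingHom.id D) Function.surjective_id fun k => by
    by_cases hk : k ≤ N
    · exact (hF k hk).imp fun _ => id
    · exact ⟨0, by rw [detIdeal_eq_bot_of_lt _ (not_le.1 hk), Ideal.span_singleton_zero]⟩

namespace SmithOverConstants

variable {c : D →+* A}

theorem of_algEquiv [Algebra D A] [Algebra D B] (h : SmithOverConstants (algebraMap D A))
    (e : A ≃ₐ[D] B) : SmithOverConstants (algebraMap D B) := fun N F hF => by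
  obtain ⟨Φ, hΦ⟩ := h N (F.map (e.symm : B →+* A)) fun k hk => by
    obtain ⟨d, hd⟩ := hF k hk
    exact ⟨d, by rw [detIdeal_map_eq_span _ hd]; simp⟩
  have hF' : (F.map (e.symm : B →+* A)).map (e : A →+* B) = F := by
    ext i j
    simp
  have hΦ' := hΦ.map (e : A →+* B)
  rw [hF'] at hΦ'
  exact ⟨Φ, by simpa using hΦ'⟩

theorem matEquiv_smithDiag {Q D' T : Type*} [CommRing Q] [IsDomain Q] [CommRing D'] [CommRing T]
    {c' : D' →+* Q} (h : SmithOverConstants c') {N : ℕ} {F : Matrix (Fin N) (Fin N) A}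
    {Φ : Fin N → D} (hΦ : DvdChain fun i => c (Φ i))
    (hF : ∀ k ≤ N, detIdeal F k = Ideal.span {c (initProd Φ k)}) (α : A →+* Q) (μ : D →+* D')
    (hα : α.comp c = c'.comp μ) (θ : Q →+* T) :
    MatEquiv (F.map (θ.comp α)) (smithDiag fun i => θ (α (c (Φ i)))) := by
  have hαc (d : D) : α (c d) = c' (μ d) := RingHom.congr_fun hα d
  have hdet (k : ℕ) (hk : k ≤ N) := detIdeal_map_eq_span α (hF k hk)
  obtain ⟨Ψ, hΨ⟩ := h N (F.map α) fun k hk => ⟨μ (initProd Φ k), by rw [hdet k hk, hαc]⟩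
  have hassoc := hΨ.dvdChain.associated_of_span_initProd_eq (hΦ.map α) fun k hk => by
    rw [← hΨ.detIdeal_eq k hk, hdet k hk, map_initProd c, map_initProd α]
  rw [← map_map_ringHom, ← smithDiag_map θ]
  exact (hΨ.matEquiv.trans (matEquiv_smithDiag_of_associated hassoc)).map θ

theorem polynomial [IsDomain A] (h : SmithOverConstants c) {Q D' : Type*} [CommRing Q]
    [IsDomain Q] [CommRing D'] {c' : D' →+* Q} (h' : SmithOverConstants c') (α : A[X] →+* Q)
    (μ : D →+* D') (hα : α.comp (Polynomial.C.comp c) = c'.comp μ)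
    (hθ : ∀ (M : Ideal A) [M.IsMaximal], ∃ θ : Q →+* MonicLocalization (Localization.AtPrime M),
      θ.comp α = (algebraMap _ _).comp (mapRingHom (algebraMap A (Localization.AtPrime M)))) :
    SmithOverConstants ((Polynomial.C : A →+* A[X]).comp c) := fun N F hF => by
  choose d hd using hF
  have hdet0 (k : ℕ) (hk : k ≤ N) :
      detIdeal (F.map (evalRingHom 0)) k = Ideal.span {c (d k hk)} := by
    simpa using detIdeal_map_eq_span (evalRingHom 0) (hd k hk)
  obtain ⟨Φ, hΦ⟩ := h N (F.map (evalRingHom 0)) fun k hk => ⟨d k hk, hdet0 k hk⟩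
  have hdet (k : ℕ) (hk : k ≤ N) :
      detIdeal F k = Ideal.span {Polynomial.C (c (initProd Φ k))} := by
    have hspan := congrArg (Ideal.map Polynomial.C)
      ((hdet0 k hk).symm.trans (hΦ.detIdeal_eq k hk))
    simp only [Ideal.map_span, Set.image_singleton, ← map_initProd c] at hspan
    rw [hd k hk, RingHom.comp_apply, hspan]
  refine ⟨Φ, (hΦ.map Polynomial.C).of_matEquiv
    (matEquiv_map_constPart_of_forall_isMaximal fun M _ => ?_)⟩
  obtain ⟨θ, hθα⟩ := hθ M
  refine matEquiv_map_constPart_of_monicLocalization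
    (hΦ.dvdChain.map (algebraMap A (Localization.AtPrime M))) (fun k hk => ?_) ?_
  · rw [detIdeal_map_eq_span _ (hdet k hk), ← map_initProd, ← map_initProd, coe_mapRingHom,
      Polynomial.map_C]
  · have hmonic := h'.matEquiv_smithDiag (c := (Polynomial.C : A →+* A[X]).comp c) (Φ := Φ)
      (hΦ.dvdChain.map Polynomial.C) hdet α μ hα θ
    rw [hθα] at hmonic
    rw [map_map_ringHom]
    convert hmonic using 3 with i
    simp [← RingHom.comp_apply θ, hθα]

theorem exists_isUnit_det_row_eq [IsDomain A] (h : SmithOverConstants c) {N : ℕ}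
    {v w : Fin (N + 1) → A} (hvw : v ⬝ᵥ w = 1) :
    ∃ P : Matrix (Fin (N + 1)) (Fin (N + 1)) A, IsUnit P.det ∧ P 0 = v := by
  let F : Matrix (Fin (N + 1)) (Fin (N + 1)) A := Matrix.of fun i => if i = 0 then v else 0
  have hF1 : detIdeal F 1 = ⊤ := by
    rw [Ideal.eq_top_iff_one, ← hvw]
    exact Ideal.sum_mem _ fun j _ =>
      Ideal.mul_mem_right _ _ (by simpa [F] using apply_mem_detIdeal_one F 0 j)
  have hF2 : detIdeal F 2 = ⊥ := detIdeal_two_eq_bot fun i hi => if_neg hi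
  obtain ⟨Φ, hΦ⟩ := h (N + 1) F fun k _ => by
    obtain hk | hk := Nat.lt_or_ge k 2
    · exact ⟨1, by interval_cases k <;> simp [hF1]⟩
    · exact ⟨0, by simpa [hF2] using detIdeal_antitone F hk⟩
  obtain ⟨U, V, -, hV, hUV⟩ := hΦ.matEquiv
  have hv : v = (U 0 0 * c (Φ 0)) • V 0 := by
    ext j
    have hj : F 0 j = (U * smithDiag (fun i => c (Φ i)) * V : Matrix _ _ A) 0 j :=
      congrFun₂ hUV 0 j
    rw [smithDiag_eq_diagonal, mul_apply, Finset.sum_eq_single 0 (fun t _ ht => by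
      rw [mul_diagonal, hΦ.eq_zero_of_detIdeal_succ_eq_bot hF2
        (Nat.one_le_iff_ne_zero.2 (Fin.val_ne_zero_iff.2 ht)), mul_zero, zero_mul])
      (by simp), mul_diagonal] at hj
    simpa [F] using hj
  have hunit : IsUnit (U 0 0 * c (Φ 0)) :=
    .of_mul_eq_one (V 0 ⬝ᵥ w) (by rw [← smul_eq_mul, ← smul_dotProduct, ← hv, hvw])
  exact ⟨(U 0 0 * c (Φ 0)) • V, by rw [det_smul]; exact (hunit.pow _).mul hV, hv.symm⟩

end SmithOverConstants

section FieldCoefficients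

variable {K L : Type*} [Field K] [CommRing L]

theorem isUnit_algebraMap_map (f : K →+* L) (p : nonZeroDivisors K[X]) :
    IsUnit ((algebraMap L[X] (MonicLocalization L)).comp (mapRingHom f) p) := by
  have hmonic := monic_mul_leadingCoeff_inv (nonZeroDivisors.coe_ne_zero p)
  exact isUnit_algebraMap_monicLocalization_iff.2
    ⟨_, hmonic.map f, Polynomial.map_mul f ▸ dvd_mul_right _ _⟩

/-- The homomorphism `K(x) → MonicLocalization L` induced by `K → L`; it exists because nonzero
polynomials over a field are monic up to a unit. -/
noncomputable def fractionToMonicLocalization (f : K →+* L) :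
    FractionRing K[X] →+* MonicLocalization L :=
  IsLocalization.lift (isUnit_algebraMap_map f)

@[simp]
theorem fractionToMonicLocalization_algebraMap (f : K →+* L) (p : K[X]) :
    fractionToMonicLocalization f (algebraMap _ _ p) = algebraMap _ _ (p.map f) :=
  IsLocalization.lift_eq _ _

variable (K) (σ : Type*)

/-- The inclusion `K → K(x)`. -/
noncomputable def toFractionField : K →+* FractionRing K[X] :=
  (algebraMap K[X] _).comp Polynomial.C

/-- The embedding `K[t][σ][x] → K(x)[t][σ]` moving the last variable into the coefficients. -/
noncomputable def lastVariableToCoeff :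
    (MvPolynomial σ K[X])[X] →+* MvPolynomial σ (FractionRing K[X])[X] :=
  eval₂RingHom (MvPolynomial.map (mapRingHom (toFractionField K)))
    (MvPolynomial.C (Polynomial.C (algebraMap K[X] _ Polynomial.X)))

variable {σ}

theorem exists_comp_lastVariableToCoeff_eq (g : MvPolynomial σ K[X] →+* L) :
    ∃ θ : MvPolynomial σ (FractionRing K[X])[X] →+* MonicLocalization L,
      θ.comp (lastVariableToCoeff K σ) = (algebraMap L[X] _).comp (mapRingHom g) := by
  let ι : MvPolynomial σ K[X] →+* MonicLocalization L :=
    ((algebraMap L[X] _).comp Polynomial.C).comp g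
  refine ⟨eval₂Hom (eval₂RingHom
    (fractionToMonicLocalization ((g.comp MvPolynomial.C).comp Polynomial.C))
    (ι (MvPolynomial.C Polynomial.X))) fun i => ι (MvPolynomial.X i), ?_⟩
  refine Polynomial.ringHom_ext' (MvPolynomial.ringHom_ext' (Polynomial.ringHom_ext' ?_ ?_) ?_) ?_
  · ext a
    simp [lastVariableToCoeff, toFractionField]
  · simp [lastVariableToCoeff, ι]
  · intro i
    simp [lastVariableToCoeff, ι]
  · simp [lastVariableToCoeff]

/- The induction on the number of variables runs over all fields at once, since the step replaces
`K` by `K(x)`. -/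
theorem smithOverConstants_mvPolynomial (σ : Type*) [Finite σ] (K : Type*) [Field K] :
    SmithOverConstants (MvPolynomial.C : K[X] →+* MvPolynomial σ K[X]) := by
  induction σ using Finite.induction_empty_option generalizing K with
  | of_equiv e h => exact (h K).of_algEquiv (renameEquiv K[X] e)
  | h_empty =>
    exact SmithOverConstants.of_algEquiv smithOverConstants_id (isEmptyAlgEquiv K[X] PEmpty).symm
  | @h_option τ _ h =>
    have hpoly := (h K).polynomial (h (FractionRing K[X])) (lastVariableToCoeff K τ)
      (mapRingHom (toFractionField K)) (by ext <;> simp [lastVariableToCoeff])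
      fun M _ => exists_comp_lastVariableToCoeff_eq (L := Localization.AtPrime M) K (algebraMap _ _)
    exact hpoly.of_algEquiv (optionEquivLeft K[X] τ).symm

end FieldCoefficients

end SmithOverConstants

section ExtraFactor

open Polynomial Finset

variable {A D : Type*} [CommRing A] [CommRing D] {l m N : ℕ}

theorem detIdeal_succ_le_span_sq [IsDomain A] {x : A} (hx : Prime x) {F : Matrix (Fin l) (Fin m) A}
    {k : ℕ} (hF : detIdeal F k ≤ Ideal.span {x}) :
    detIdeal F (k + 1) ≤ Ideal.span {x ^ 2} := by
  rw [detIdeal_le_iff]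
  intro r c
  let M := F.submatrix r c
  have hadj (i j) : x ∣ M.adjugate i j := by
    rw [adjugate_fin_succ_eq_det_submatrix, submatrix_submatrix]
    exact (Ideal.mem_span_singleton.1 (hF (det_submatrix_mem_detIdeal F _ _))).mul_left _
  choose B hB using hadj
  have hadj_eq : M.adjugate = x • Matrix.of B := Matrix.ext hB
  obtain ⟨y, hy⟩ : x ∣ M.det := Ideal.mem_span_singleton.1
    ((detIdeal_antitone F k.le_succ).trans hF (det_submatrix_mem_detIdeal F r c))
  have hpow : x * (of B).det = y ^ k := by
    refine mul_left_cancel₀ (pow_ne_zero k hx.ne_zero) ?_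
    have hdet := det_adjugate M
    rw [hadj_eq, det_smul, Fintype.card_fin, Nat.add_sub_cancel, hy] at hdet
    rw [← mul_assoc, ← pow_succ, hdet, mul_pow]
  rw [Ideal.mem_span_singleton, hy, pow_two]
  exact mul_dvd_mul_left x (hx.dvd_of_dvd_pow ⟨_, hpow.symm⟩)

theorem C_dvd_of_C_dvd_X_pow_mul {a : A} {e : ℕ} {p : A[X]}
    (h : Polynomial.C a ∣ Polynomial.X ^ e * p) : Polynomial.C a ∣ p := by
  rw [Polynomial.C_dvd_iff_dvd_coeff] at h ⊢
  exact fun i => by simpa only [Polynomial.coeff_X_pow_mul] using h (i + e)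

theorem det_submatrix_mul_diagonal (F : Matrix (Fin l) (Fin m) A) (d : Fin m → A) {k : ℕ}
    (r : Fin k → Fin l) (c : Fin k → Fin m) :
    ((F * diagonal d).submatrix r c).det = (∏ i, d (c i)) * (F.submatrix r c).det := by
  rw [← det_mul_row]
  congr 1
  ext i j
  simp [mul_comm]

/-- The diagonal matrix `diag(1, …, 1, X, …, X)` of size `m` with `s` entries `1`. -/
noncomputable def twist (A : Type*) [CommRing A] (m s : ℕ) : Matrix (Fin m) (Fin m) A[X] :=
  diagonal fun j => if (j : ℕ) < s then 1 else Polynomial.X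

theorem mul_twist_apply_of_lt (G : Matrix (Fin l) (Fin m) A[X]) {s : ℕ} {j : Fin m}
    (hj : (j : ℕ) < s) (i : Fin l) : (G * twist A m s) i j = G i j := by
  rw [twist, mul_diagonal, if_pos hj, mul_one]

theorem det_submatrix_mul_twist (G : Matrix (Fin l) (Fin m) A[X]) (s : ℕ) {k : ℕ}
    (r : Fin k → Fin l) (c : Fin k → Fin m) :
    ((G * twist A m s).submatrix r c).det =
      Polynomial.X ^ #{i | ¬ (c i : ℕ) < s} * (G.submatrix r c).det := by
  rw [twist, det_submatrix_mul_diagonal, prod_ite, prod_const_one, one_mul,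
    prod_const]

theorem card_filter_not_lt_pos {s k : ℕ} (hk : s < k) (c : Fin k ↪ Fin m) :
    0 < #{i | ¬ (c i : ℕ) < s} := by
  by_contra! h
  have hlt (i : Fin k) : (c i : ℕ) < s := by
    simpa using filter_eq_empty_iff.1 (card_eq_zero.1 (Nat.le_zero.1 h))
      (mem_univ i)
  have hcard := Fintype.card_le_of_injective (fun i => (⟨c i, hlt i⟩ : Fin s)) fun i j hij =>
    c.injective (Fin.ext (Fin.mk.inj hij))
  rw [Fintype.card_fin, Fintype.card_fin] at hcard
  exact hcard.not_gt hk

theorem exists_det_submatrix_mul_twist_eq_X_mul (G : Matrix (Fin l) (Fin m) A[X]) {s k : ℕ}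
    (hk : s < k) (r : Fin k → Fin l) (c : Fin k ↪ Fin m) :
    ∃ e, ((G * twist A m s).submatrix r c).det =
      Polynomial.X * (Polynomial.X ^ e * (G.submatrix r c).det) :=
  ⟨#{i | ¬ (c i : ℕ) < s} - 1, by
    rw [det_submatrix_mul_twist, ← mul_assoc, mul_pow_sub_one (card_filter_not_lt_pos hk c).ne']⟩

theorem detIdeal_eq_span_C_of_mul_twist {s k : ℕ} {G : Matrix (Fin l) (Fin m) A[X]} {a : A}
    (h : detIdeal (G * twist A m s) k = Ideal.span {Polynomial.C a}) :
    detIdeal G k = Ideal.span {Polynomial.C a} := by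
  refine le_antisymm ((detIdeal_le_iff G _).2 fun r c => ?_) (h ▸ detIdeal_mul_le_left G _ k)
  have hmem := det_submatrix_mem_detIdeal (G * twist A m s) r c
  rw [h, det_submatrix_mul_twist, Ideal.mem_span_singleton] at hmem
  exact Ideal.mem_span_singleton.2 (C_dvd_of_C_dvd_X_pow_mul hmem)

theorem detIdeal_eq_span_C_of_mul_twist_of_lt [IsDomain A] {s k : ℕ} (hk : s < k)
    {G : Matrix (Fin l) (Fin m) A[X]} {a : A}
    (h : detIdeal (G * twist A m s) k = Ideal.span {Polynomial.X * Polynomial.C a}) :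
    detIdeal G k = Ideal.span {Polynomial.C a} := by
  refine le_antisymm ((detIdeal_le_iff G _).2 fun r c => ?_) ?_
  · have hmem := det_submatrix_mem_detIdeal (G * twist A m s) r c
    obtain ⟨e, he⟩ := exists_det_submatrix_mul_twist_eq_X_mul G hk r c
    rw [h, he, Ideal.mem_span_singleton, mul_dvd_mul_iff_left Polynomial.X_ne_zero] at hmem
    exact Ideal.mem_span_singleton.2 (C_dvd_of_C_dvd_X_pow_mul hmem)
  · have hle : detIdeal (G * twist A m s) k ≤ Ideal.span {Polynomial.X} * detIdeal G k := by
      refine (detIdeal_le_iff _ _).2 fun r c => ?_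
      obtain ⟨e, he⟩ := exists_det_submatrix_mul_twist_eq_X_mul G hk r c
      exact he ▸ Ideal.mul_mem_mul (Ideal.mem_span_singleton_self _)
        (Ideal.mul_mem_left _ _ (det_submatrix_mem_detIdeal G r c))
    rwa [h, ← Ideal.span_singleton_mul_span_singleton,
      Ideal.span_singleton_mul_right_mono Polynomial.X_ne_zero] at hle

theorem exists_mul_twist_eq_twist_mul [IsDomain A] (s : ℕ) {V : Matrix (Fin m) (Fin m) A[X]}
    (hV : IsUnit V.det) (hV0 : V.map constPart = 1) :
    ∃ W : Matrix (Fin m) (Fin m) A[X], IsUnit W.det ∧ V * twist A m s = twist A m s * W := by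
  let t (j : Fin m) : A[X] := if (j : ℕ) < s then 1 else Polynomial.X
  have offDiag {i j} (hij : i ≠ j) : Polynomial.X ∣ V i j := by
    have hentry := congrFun₂ hV0 i j
    rw [Matrix.map_apply, one_apply_ne hij] at hentry
    rw [Polynomial.X_dvd_iff, Polynomial.coeff_zero_eq_eval_zero]
    simpa [constPart] using hentry
  have hdvd (i j) : t i ∣ V i j * t j := by
    by_cases hi : (i : ℕ) < s
    · simp [t, hi]
    · by_cases hj : (j : ℕ) < s
      · simpa [t, hi, hj] using offDiag (by rintro rfl; exact hi hj)
      · simp [t, hi, hj]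
  choose W hW using hdvd
  have hVW : V * diagonal t = diagonal t * of W := by
    ext1 i j
    rw [mul_diagonal, diagonal_mul, of_apply, hW]
  have hdiag : (diagonal t).det ≠ 0 := by
    rw [det_diagonal, prod_ne_zero_iff]
    intro i _
    dsimp only [t]
    split_ifs
    exacts [one_ne_zero, Polynomial.X_ne_zero]
  have hdet := congrArg Matrix.det hVW
  rw [det_mul, det_mul, mul_comm] at hdet
  exact ⟨of W, mul_left_cancel₀ hdiag hdet ▸ hV, hVW⟩

theorem constPart_comp_C : constPart.comp Polynomial.C = (Polynomial.C : A →+* A[X]) := by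
  ext
  simp [constPart]

theorem constPart_comp_constPart : constPart.comp constPart = (constPart : A[X] →+* A[X]) := by
  apply Polynomial.ringHom_ext <;> simp [constPart]

theorem MatEquiv.mul_twist [IsDomain A] {G : Matrix (Fin l) (Fin m) A[X]}
    {S : Matrix (Fin l) (Fin m) A} (h : MatEquiv G (S.map Polynomial.C)) (s : ℕ) :
    MatEquiv (G * twist A m s) (G.map constPart * twist A m s) := by
  obtain ⟨U, V, hU, hV, rfl⟩ := h
  have hU₀ := isUnit_det_map constPart hU
  have hV₀ := isUnit_det_map constPart hV
  obtain ⟨W, hW, hVW⟩ := exists_mul_twist_eq_twist_mul s (V := (V.map constPart)⁻¹ * V)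
    (by rw [det_mul]; exact (isUnit_nonsing_inv_det _ hV₀).mul hV) (by
      rw [Matrix.map_mul, map_inv_of_isUnit_det _ hV₀, map_map_ringHom, constPart_comp_constPart,
        nonsing_inv_mul _ hV₀])
  refine ⟨U * (U.map constPart)⁻¹, W, ?_, hW, ?_⟩
  · rw [det_mul]
    exact hU.mul (isUnit_nonsing_inv_det _ hU₀)
  · rw [Matrix.map_mul, Matrix.map_mul, map_map_ringHom, constPart_comp_C, Matrix.mul_assoc _ _ W,
      Matrix.mul_assoc _ _ W, ← hVW]
    simp only [Matrix.mul_assoc]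
    rw [nonsing_inv_mul_cancel_left _ _ hU₀, mul_nonsing_inv_cancel_left _ _ hV₀]

theorem exists_eq_mul_twist {s : ℕ} {G : Matrix (Fin l) (Fin m) A[X]}
    (hG : ∀ i (j : Fin m), s ≤ (j : ℕ) → Polynomial.X ∣ G i j) :
    ∃ G' : Matrix (Fin l) (Fin m) A[X], G = G' * twist A m s := by
  have hdvd (i) (j : Fin m) : (if (j : ℕ) < s then (1 : A[X]) else Polynomial.X) ∣ G i j := by
    split_ifs with hj
    exacts [one_dvd _, hG i j (not_lt.1 hj)]
  choose G' hG' using hdvd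
  refine ⟨of G', ?_⟩
  ext1 i j
  rw [twist, mul_diagonal, of_apply, mul_comm, hG']

theorem exists_matEquiv_map_evalRingHom_zero_eq {F : Matrix (Fin l) (Fin m) A[X]}
    {S : Matrix (Fin l) (Fin m) A} (h : MatEquiv (F.map (evalRingHom 0)) S) :
    ∃ G, MatEquiv F G ∧ G.map (evalRingHom 0) = S := by
  obtain ⟨U, V, hU, hV, hUV⟩ := h.symm
  refine ⟨_, (MatEquiv.of_mul (isUnit_det_map Polynomial.C hU)
    (isUnit_det_map Polynomial.C hV)).symm, ?_⟩
  have hC : (evalRingHom (0 : A)).comp Polynomial.C = RingHom.id A := by ext; simp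
  rw [Matrix.map_mul, Matrix.map_mul, map_map_ringHom, map_map_ringHom, hC, hUV]
  simp

theorem SmithOverConstants.exists_matEquiv_mul_twist [IsDomain A] {c : D →+* A}
    (h : SmithOverConstants c) {F : Matrix (Fin (N + 1)) (Fin (N + 1)) A[X]}
    (hF1 : detIdeal F 1 = ⊤) {s : ℕ} (hs : 0 < s) {d : D}
    (hFs : detIdeal F (s + 1) = Ideal.span {Polynomial.X * Polynomial.C (c d)})
    (hF : ∀ k ≠ s + 1, ∃ d, detIdeal F k = Ideal.span {Polynomial.C (c d)}) :
    ∃ G, MatEquiv F (G * twist A (N + 1) s) ∧ IsUnit ((G 0 0).eval 0) := by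
  have hFs0 : detIdeal (F.map (evalRingHom 0)) (s + 1) = ⊥ := by
    simpa using detIdeal_map_eq_span (evalRingHom 0) hFs
  obtain ⟨Φ, hΦ⟩ := h (N + 1) (F.map (evalRingHom 0)) fun k _ => by
    obtain rfl | hk := eq_or_ne k (s + 1)
    · exact ⟨0, by simpa using hFs0⟩
    · obtain ⟨d, hd⟩ := hF k hk
      exact ⟨d, by simpa using detIdeal_map_eq_span (evalRingHom 0) hd⟩
  obtain ⟨G, hFG, hG⟩ := exists_matEquiv_map_evalRingHom_zero_eq hΦ.matEquiv
  have hGij (i j : Fin (N + 1)) : (G i j).eval 0 = if (i : ℕ) = j then c (Φ i) else 0 :=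
    congrFun₂ hG i j
  obtain ⟨G', rfl⟩ := exists_eq_mul_twist (s := s) (G := G) fun i j hj => by
    rw [Polynomial.X_dvd_iff, Polynomial.coeff_zero_eq_eval_zero, hGij]
    split_ifs with hij
    exacts [hΦ.eq_zero_of_detIdeal_succ_eq_bot hFs0 (hij ▸ hj), rfl]
  refine ⟨G', hFG, ?_⟩
  have hG'00 := hGij 0 0
  rw [mul_twist_apply_of_lt G' (by simpa using hs), if_pos rfl] at hG'00
  rw [hG'00]
  exact hΦ.isUnit_zero (by rw [detIdeal_map, hF1, Ideal.map_top])

theorem SmithOverConstants.exists_matEquiv_isUnit_of_eq_span_X_mul [IsDomain A] {c : D →+* A}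
    (h : SmithOverConstants c) (hX : SmithOverConstants ((Polynomial.C : A →+* A[X]).comp c))
    {F : Matrix (Fin (N + 1)) (Fin (N + 1)) A[X]} (hF1 : detIdeal F 1 = ⊤) {s : ℕ} (hs : 0 < s)
    {d : D} (hFs : detIdeal F (s + 1) = Ideal.span {Polynomial.X * Polynomial.C (c d)})
    (hF : ∀ k ≠ s + 1, ∃ d, detIdeal F k = Ideal.span {Polynomial.C (c d)}) :
    ∃ H, MatEquiv F H ∧ IsUnit (H 0 0) := by
  obtain ⟨G, hFG, hG⟩ := h.exists_matEquiv_mul_twist hF1 hs hFs hF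
  obtain ⟨Φ, hΦ⟩ := hX (N + 1) G fun k _ => by
    obtain rfl | hk := eq_or_ne k (s + 1)
    · exact ⟨d, detIdeal_eq_span_C_of_mul_twist_of_lt s.lt_succ_self
        ((hFG.detIdeal_eq _).symm.trans hFs)⟩
    · obtain ⟨d, hd⟩ := hF k hk
      exact ⟨d, detIdeal_eq_span_C_of_mul_twist ((hFG.detIdeal_eq k).symm.trans hd)⟩
  have hGΦ := hΦ.matEquiv
  simp only [RingHom.comp_apply, ← smithDiag_map Polynomial.C] at hGΦ
  refine ⟨_, hFG.trans (hGΦ.mul_twist s), ?_⟩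
  rw [mul_twist_apply_of_lt _ (by simpa using hs)]
  exact hG.map Polynomial.C

theorem detIdeal_eq_bot_of_lt_of_eq_span_X_mul [IsDomain A] {F : Matrix (Fin l) (Fin m) A[X]}
    {a b : ℕ} (hab : a < b) {p : A[X]} (ha : detIdeal F a = Ideal.span {Polynomial.X * p}) {q : A}
    (hb : detIdeal F b = Ideal.span {Polynomial.C q} ∨
      detIdeal F b = Ideal.span {Polynomial.X * Polynomial.C q}) : detIdeal F b = ⊥ := by
  have hle : detIdeal F b ≤ Ideal.span {Polynomial.X ^ 2} :=
    (detIdeal_antitone F hab).trans (detIdeal_succ_le_span_sq Polynomial.prime_X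
      (ha.trans_le (Ideal.span_singleton_le_span_singleton.2 (dvd_mul_right _ _))))
  have hdvd : Polynomial.X ∣ Polynomial.C q := by
    obtain hb | hb := hb <;> rw [hb, Ideal.span_singleton_le_span_singleton, pow_two] at hle
    · exact (dvd_mul_right _ _).trans hle
    · exact (mul_dvd_mul_iff_left Polynomial.X_ne_zero).1 hle
  obtain rfl : q = 0 := by simpa [Polynomial.X_dvd_iff] using hdvd
  simpa using hb

theorem SmithOverConstants.exists_matEquiv_isUnit [IsDomain A] {c : D →+* A}
    (h : SmithOverConstants c) (hX : SmithOverConstants ((Polynomial.C : A →+* A[X]).comp c))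
    {F : Matrix (Fin (N + 1)) (Fin (N + 1)) A[X]} (hF1 : detIdeal F 1 = ⊤)
    (hF : ∀ k, ∃ d, detIdeal F k = Ideal.span {Polynomial.C (c d)} ∨
      detIdeal F k = Ideal.span {Polynomial.X * Polynomial.C (c d)}) :
    ∃ H, MatEquiv F H ∧ IsUnit (H 0 0) := by
  by_cases hconst : ∀ k, ∃ d, detIdeal F k = Ideal.span {Polynomial.C (c d)}
  · obtain ⟨Φ, hΦ⟩ := hX (N + 1) F fun k _ => hconst k
    exact ⟨_, hΦ.matEquiv, by simpa [smithDiag] using hΦ.isUnit_zero hF1⟩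
  · push Not at hconst
    obtain ⟨k₀, hk₀⟩ := hconst
    obtain ⟨d₀, hd₀⟩ := hF k₀
    replace hd₀ := hd₀.resolve_left (hk₀ d₀)
    obtain ⟨s, rfl⟩ : ∃ s, k₀ = s + 1 + 1 := by
      refine Nat.exists_eq_add_of_le' (m := 2) ?_
      by_contra! hlt
      exact hk₀ 1 (by interval_cases k₀ <;> simp [hF1])
    refine h.exists_matEquiv_isUnit_of_eq_span_X_mul hX hF1 s.succ_pos hd₀ fun k hk => ?_
    obtain ⟨d, hd⟩ := hF k
    obtain hlt | hgt := hk.lt_or_gt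
    · refine ⟨d, hd.resolve_right fun hdX => hk₀ 0 ?_⟩
      simpa using detIdeal_eq_bot_of_lt_of_eq_span_X_mul hlt hdX (.inr hd₀)
    · exact ⟨0, by simpa using detIdeal_eq_bot_of_lt_of_eq_span_X_mul hgt hd₀ hd⟩

end ExtraFactor

section Padding

variable {A : Type*} [CommRing A] {l m p q : ℕ}

theorem detIdeal_mul_mul_of_mul_eq_one {L : Matrix (Fin p) (Fin l) A}
    {L' : Matrix (Fin l) (Fin p) A} {R : Matrix (Fin m) (Fin q) A} {R' : Matrix (Fin q) (Fin m) A}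
    (hL : L' * L = 1) (hR : R * R' = 1) (F : Matrix (Fin l) (Fin m) A) (k : ℕ) :
    detIdeal (L * F * R) k = detIdeal F k := by
  refine le_antisymm ((detIdeal_mul_le_left _ _ k).trans (detIdeal_mul_le_right _ _ k)) ?_
  have hF : L' * (L * F * R) * R' = F := by
    rw [← Matrix.mul_assoc, ← Matrix.mul_assoc, hL, Matrix.one_mul, Matrix.mul_assoc, hR,
      Matrix.mul_one]
  calc detIdeal F k = detIdeal (L' * (L * F * R) * R') k := by rw [hF]
    _ ≤ detIdeal (L * F * R) k :=
      (detIdeal_mul_le_left _ _ k).trans (detIdeal_mul_le_right _ _ k)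

theorem smithDiag_one_mul_smithDiag_one (h : l ≤ m) :
    (smithDiag 1 : Matrix (Fin l) (Fin m) A) * (smithDiag 1 : Matrix (Fin m) (Fin l) A) = 1 := by
  ext i j
  rw [mul_apply, Finset.sum_eq_single (Fin.castLE h i)]
  · simp [smithDiag, one_apply, Fin.ext_iff]
  · intro t _ ht
    have hit : ¬ ((i : ℕ) = (t : ℕ)) := fun hit => ht (Fin.ext hit.symm)
    simp [smithDiag, hit]
  · simp

theorem exists_dotProduct_mulVec_eq_one_of_matEquiv_mul_mul
    {L : Matrix (Fin (p + 1)) (Fin l) A} {F : Matrix (Fin l) (Fin m) A}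
    {R : Matrix (Fin m) (Fin (q + 1)) A} {H : Matrix (Fin (p + 1)) (Fin (q + 1)) A}
    (h : MatEquiv (L * F * R) H) (hH : IsUnit (H 0 0)) : ∃ a b, a ⬝ᵥ F *ᵥ b = 1 := by
  obtain ⟨U, V, -, -, rfl⟩ := h.symm
  obtain ⟨u, hu⟩ := hH.exists_left_inv
  refine ⟨u • (U * L) 0, fun j => (R * V) j 0, ?_⟩
  have hUV : U * (L * F * R) * V = U * L * (F * (R * V)) := by simp only [Matrix.mul_assoc]
  rw [smul_dotProduct, ← hu, hUV]
  rfl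

namespace SmithOverConstants

variable {D : Type*} [CommRing D] [IsDomain A] {c : D →+* A}

theorem exists_matEquiv_bordered_one_of_dotProduct (h : SmithOverConstants c)
    {F : Matrix (Fin (l + 1)) (Fin (m + 1)) A} {a : Fin (l + 1) → A} {b : Fin (m + 1) → A}
    (hab : a ⬝ᵥ F *ᵥ b = 1) : ∃ G, MatEquiv F (bordered 1 0 0 G) := by
  obtain ⟨P, hP, rfl⟩ := h.exists_isUnit_det_row_eq hab
  obtain ⟨Q, hQ, rfl⟩ := h.exists_isUnit_det_row_eq (v := b) (w := P 0 ᵥ* F) (by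
    rw [dotProduct_comm, ← dotProduct_mulVec, hab])
  have hcorner : (P * F * Qᵀ) 0 0 = 1 := by
    rw [← hab, Matrix.mul_assoc]
    rfl
  obtain ⟨G, hG⟩ := exists_matEquiv_bordered_one (hcorner ▸ isUnit_one)
  exact ⟨G, (MatEquiv.of_mul hP (det_transpose Q ▸ hQ)).symm.trans hG⟩

/- A rectangular matrix is padded with zeros to a square one; the unit entry found there is a
value `a F b` of the original matrix. -/
theorem exists_matEquiv_bordered_one (h : SmithOverConstants c) {D₀ : A}
    (square : ∀ (N : ℕ) (F : Matrix (Fin (N + 1)) (Fin (N + 1)) A), detIdeal F 1 = ⊤ →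
      HasPrincipalMinors D₀ F → ∃ H, MatEquiv F H ∧ IsUnit (H 0 0))
    {F : Matrix (Fin (l + 1)) (Fin (m + 1)) A} (hF1 : detIdeal F 1 = ⊤)
    (hF : HasPrincipalMinors D₀ F) : ∃ G, MatEquiv F (bordered 1 0 0 G) := by
  let L : Matrix (Fin (l + m + 1)) (Fin (l + 1)) A := smithDiag 1
  let R : Matrix (Fin (m + 1)) (Fin (l + m + 1)) A := smithDiag 1
  have hpad := detIdeal_mul_mul_of_mul_eq_one (L := L) (R := R)
    (smithDiag_one_mul_smithDiag_one (by lia)) (smithDiag_one_mul_smithDiag_one (by lia)) F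
  obtain ⟨H, hFH, hH⟩ := square (l + m) (L * F * R) (by rw [hpad, hF1]) fun k => by
    rw [hpad]
    exact hF k
  obtain ⟨a, b, hab⟩ := exists_dotProduct_mulVec_eq_one_of_matEquiv_mul_mul hFH hH
  exact h.exists_matEquiv_bordered_one_of_dotProduct hab

end SmithOverConstants

end Padding

section ExtraFactorSmithForm

open Polynomial

variable {A B D : Type*} [CommRing A] [CommRing B] [CommRing D] {l m : ℕ}

theorem exists_dvd_of_dvd_X_mul_C [IsDomain A] {p : A[X]} {a : A} (ha : a ≠ 0)
    (hp : p ∣ Polynomial.X * Polynomial.C a) :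
    ∃ b, b ∣ a ∧ (p = Polynomial.C b ∨ p = Polynomial.X * Polynomial.C b) := by
  have exists_C {q : A[X]} (hq : q ∣ Polynomial.C a) : ∃ b, b ∣ a ∧ q = Polynomial.C b := by
    obtain ⟨b, rfl⟩ := Polynomial.natDegree_eq_zero.1 <| Nat.le_zero.1 <|
      (Polynomial.natDegree_le_of_dvd hq (Polynomial.C_ne_zero.2 ha)).trans_eq
        (Polynomial.natDegree_C a)
    exact ⟨b, by simpa using (Polynomial.C_dvd_iff_dvd_coeff _ _).1 hq 0, rfl⟩
  obtain ⟨p, rfl⟩ | hp := Polynomial.prime_X.left_dvd_or_dvd_right_of_dvd_mul hp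
  · obtain ⟨b, hb, rfl⟩ := exists_C ((mul_dvd_mul_iff_left Polynomial.X_ne_zero).1 hp)
    exact ⟨b, hb, .inr rfl⟩
  · obtain ⟨b, hb, rfl⟩ := exists_C hp
    exact ⟨b, hb, .inl rfl⟩

theorem SmithOverConstants.exists_isSmithForm_of_X_mul_C [IsDomain A] {c : D →+* A}
    (h : SmithOverConstants c) (hX : SmithOverConstants ((Polynomial.C : A →+* A[X]).comp c))
    {d : D} (hd : c d ≠ 0) (hdvd : ∀ a, a ∣ c d → ∃ b, a = c b) {F : Matrix (Fin l) (Fin m) A[X]}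
    (hF : HasPrincipalMinors (Polynomial.X * Polynomial.C (c d)) F) : ∃ Φ, IsSmithForm F Φ := by
  refine hF.exists_isSmithForm fun l m F hF1 hF => hX.exists_matEquiv_bordered_one
    (fun N F hF1 hF => h.exists_matEquiv_isUnit hX hF1 fun k => ?_) hF1 hF
  obtain ⟨δ, hδ, rfl | hδd⟩ := hF k
  · exact ⟨0, .inl (by simpa using hδ)⟩
  · obtain ⟨a, ha, haδ⟩ := exists_dvd_of_dvd_X_mul_C hd hδd
    obtain ⟨b, rfl⟩ := hdvd a ha
    obtain rfl | rfl := haδ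
    exacts [⟨b, .inl hδ⟩, ⟨b, .inr hδ⟩]

theorem HasPrincipalMinors.map {D₀ : A} {F : Matrix (Fin l) (Fin m) A}
    (hF : HasPrincipalMinors D₀ F) (f : A →+* B) : HasPrincipalMinors (f D₀) (F.map f) := by
  intro k
  obtain ⟨δ, hδ, hδD⟩ := hF k
  exact ⟨f δ, detIdeal_map_eq_span f hδ, hδD.imp (by rintro rfl; exact map_zero f) (map_dvd f)⟩

theorem HasPrincipalMinors.exists_isSmithForm_of_ringEquiv {D₀ : A} (e : A ≃+* B)
    (h : ∀ F : Matrix (Fin l) (Fin m) B, HasPrincipalMinors (e D₀) F → ∃ Φ, IsSmithForm F Φ)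
    {F : Matrix (Fin l) (Fin m) A} (hF : HasPrincipalMinors D₀ F) : ∃ Φ, IsSmithForm F Φ := by
  obtain ⟨Φ, hΦ⟩ := h _ (hF.map (e : A →+* B))
  have hFe : (F.map (e : A →+* B)).map (e.symm : B →+* A) = F := by
    ext i j
    simp
  exact ⟨_, hFe ▸ hΦ.map (e.symm : B →+* A)⟩

end ExtraFactorSmithForm

section ReducedMinors

variable {A : Type*} [CommRing A] {l m k : ℕ} {F : Matrix (Fin l) (Fin m) A} {d : A}

theorem forall_minorsSet_dvd_iff :
    (∀ p ∈ minorsSet F k, d ∣ p) ↔ detIdeal F k ≤ Ideal.span {d} := by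
  simp only [detIdeal, Ideal.span_le, Set.subset_def, SetLike.mem_coe, Ideal.mem_span_singleton]

theorem isGcdMinors_of_detIdeal_eq (h : detIdeal F k = Ideal.span {d}) : IsGcdMinors F k d :=
  ⟨forall_minorsSet_dvd_iff.2 h.le, fun e he => by
    rwa [forall_minorsSet_dvd_iff, h, Ideal.span_singleton_le_span_singleton] at he⟩

theorem detIdeal_eq_span_mul_reducedIdeal (hd : ∀ p ∈ minorsSet F k, d ∣ p) :
    detIdeal F k = Ideal.span {d} * reducedIdeal F k d := by
  rw [detIdeal, reducedIdeal, Ideal.span_mul_span', Set.singleton_mul]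
  congr 1
  ext p
  refine ⟨fun hp => ?_, by rintro ⟨v, hv, rfl⟩; exact hv⟩
  obtain ⟨v, rfl⟩ := hd p hp
  exact ⟨v, hp, rfl⟩

theorem jkUnit_iff_exists_detIdeal_eq_span [IsDomain A] (hF : detIdeal F k ≠ ⊥) :
    JkUnit F k ↔ ∃ d, detIdeal F k = Ideal.span {d} := by
  constructor
  · rintro ⟨d, hd, hJ⟩
    exact ⟨d, by rw [detIdeal_eq_span_mul_reducedIdeal hd.1, hJ, Ideal.mul_top]⟩
  · rintro ⟨d, hd⟩
    have hgcd := isGcdMinors_of_detIdeal_eq hd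
    have hd0 : d ≠ 0 := by
      rintro rfl
      exact hF (by simpa using hd)
    refine ⟨d, hgcd, (Ideal.span_singleton_mul_right_inj hd0).1 ?_⟩
    rw [← detIdeal_eq_span_mul_reducedIdeal hgcd.1, hd, Ideal.mul_top]

end ReducedMinors

section Rank

variable {A : Type*} [CommRing A] {l m r : ℕ} {F : Matrix (Fin l) (Fin m) A}

namespace HasRank

theorem detIdeal_ne_bot (h : HasRank F r) {k : ℕ} (hk : k ≤ r) : detIdeal F k ≠ ⊥ := by
  obtain ⟨p, hp, hp0⟩ := h.1
  intro hbot
  have hpk : p ∈ detIdeal F k := detIdeal_antitone F hk (Ideal.subset_span hp)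
  exact hp0 (by simpa [hbot] using hpk)

theorem detIdeal_eq_bot (h : HasRank F r) {k : ℕ} (hk : r < k) : detIdeal F k = ⊥ :=
  eq_bot_iff.2 ((detIdeal_antitone F hk).trans (Ideal.span_eq_bot.2 h.2).le)

theorem le_rows (h : HasRank F r) : r ≤ l := by
  obtain ⟨_, ⟨a, -, -⟩, -⟩ := h.1
  simpa using Fintype.card_le_of_embedding a

theorem le_columns (h : HasRank F r) : r ≤ m := by
  obtain ⟨_, ⟨-, b, -⟩, -⟩ := h.1
  simpa using Fintype.card_le_of_embedding b

theorem gcd_ne_zero (h : HasRank F r) {d : A} (hd : IsGcdMinors F r d) : d ≠ 0 := by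
  rintro rfl
  obtain ⟨p, hp, hp0⟩ := h.1
  exact hp0 (zero_dvd_iff.1 (hd.1 p hp))

end HasRank

theorem initProd_succ_eq_prod_Iic (Φ : Fin l → A) (i : Fin l) :
    initProd Φ (i + 1) = ∏ j ∈ Finset.Iic i, Φ j := by
  refine Finset.prod_congr ?_ fun _ _ => rfl
  ext j
  rw [Finset.mem_filter_univ, Finset.mem_Iic, Nat.lt_succ_iff, Fin.le_def]

theorem initProd_eq_prod_castLE (Φ : Fin l → A) {k : ℕ} (hk : k ≤ l) :
    initProd Φ k = ∏ i : Fin k, Φ (Fin.castLE hk i) := by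
  induction k with
  | zero => simp
  | succ k ih =>
    rw [Fin.prod_univ_castSucc, initProd_succ Φ ⟨k, hk⟩, ih (by lia)]
    rfl

theorem initProd_mem_detIdeal_smithDiag (Φ : Fin l → A) {k : ℕ} (hl : k ≤ l) (hm : k ≤ m) :
    initProd Φ k ∈ detIdeal (smithDiag Φ : Matrix (Fin l) (Fin m) A) k := by
  have hminor : ((smithDiag Φ : Matrix (Fin l) (Fin m) A).submatrix (Fin.castLE hl)
      (Fin.castLE hm)) = diagonal fun i => Φ (Fin.castLE hl i) := by
    ext i j
    simp [smithDiag, diagonal, Fin.ext_iff]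
  rw [initProd_eq_prod_castLE Φ hl, ← det_diagonal, ← hminor]
  exact det_submatrix_mem_detIdeal _ _ _

theorem SmithEquivAt.detIdeal_eq_span (h : SmithEquivAt F r) (hF : HasRank F r) {k : ℕ}
    (hk : k ≤ r) : ∃ d, detIdeal F k = Ideal.span {d} := by
  obtain ⟨Φ, hgcd, -, hFΦ⟩ := h
  refine ⟨initProd Φ k, le_antisymm ?_ ((Ideal.span_singleton_le_iff_mem _).2 ?_)⟩
  · cases k with
    | zero => simp
    | succ k =>
      have hkl : k < l := hk.trans hF.le_rows
      exact initProd_succ_eq_prod_Iic Φ ⟨k, hkl⟩ ▸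
        forall_minorsSet_dvd_iff.1 (hgcd ⟨k, hkl⟩ hk).1
  · rw [hFΦ.detIdeal_eq]
    exact initProd_mem_detIdeal_smithDiag Φ (hk.trans hF.le_rows) (hk.trans hF.le_columns)

theorem IsSmithForm.smithEquivAt [IsDomain A] {Φ : Fin l → A} (h : IsSmithForm F Φ)
    (hF : HasRank F r) : SmithEquivAt F r :=
  ⟨Φ, fun i _ => initProd_succ_eq_prod_Iic Φ i ▸ isGcdMinors_of_detIdeal_eq (h.detIdeal_eq _ i.2),
    fun _ hi => h.eq_zero_of_detIdeal_succ_eq_bot (hF.detIdeal_eq_bot r.lt_succ_self) hi,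
    h.matEquiv⟩

theorem HasRank.hasPrincipalMinors (hF : HasRank F r) {d : A} (hd : IsGcdMinors F r d)
    (h : ∀ k, 1 ≤ k → k ≤ r → ∃ δ, detIdeal F k = Ideal.span {δ}) : HasPrincipalMinors d F := by
  intro k
  obtain rfl | hk0 := k.eq_zero_or_pos
  · exact ⟨1, by simp, .inr (one_dvd d)⟩
  obtain hkr | hrk := le_or_gt k r
  · obtain ⟨δ, hδ⟩ := h k hk0 hkr
    exact ⟨δ, hδ, .inr (hd.2 δ (forall_minorsSet_dvd_iff.2 (hδ ▸ detIdeal_antitone F hkr)))⟩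
  · exact ⟨0, by simpa using hF.detIdeal_eq_bot hrk, .inl rfl⟩

theorem smithEquivAt_iff_forall_jkUnit [IsDomain A] (hF : HasRank F r) {d : A}
    (hd : IsGcdMinors F r d) (h : HasPrincipalMinors d F → ∃ Φ, IsSmithForm F Φ) :
    SmithEquivAt F r ↔ ∀ k, 1 ≤ k → k ≤ r → JkUnit F k := by
  have hJ (k : ℕ) (hk : k ≤ r) := jkUnit_iff_exists_detIdeal_eq_span (hF.detIdeal_ne_bot hk)
  refine ⟨fun hS k _ hk => (hJ k hk).2 (hS.detIdeal_eq_span hF hk), fun hk => ?_⟩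
  obtain ⟨Φ, hΦ⟩ := h (hF.hasPrincipalMinors hd fun k hk1 hkr => (hJ k hkr).1 (hk k hk1 hkr))
  exact hΦ.smithEquivAt hF

end Rank

section VariableSplitting

open Polynomial

variable (K : Type*) [Field K] {σ : Type*} [DecidableEq σ] (i : σ)

/-- The isomorphism identifying `K[σ]` with the univariate polynomials in the variable `i` over
`K[σ \ {i}]`. -/
noncomputable def splitVariable : MvPolynomial σ K ≃ₐ[K] (MvPolynomial {t // t ≠ i} K)[X] :=
  (renameEquiv K (Equiv.optionSubtypeNe i).symm).trans (optionEquivLeft K {t // t ≠ i})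

/-- The isomorphism moving the variable `i` of `K[σ]` into the coefficients. -/
noncomputable def variableToCoeff : MvPolynomial σ K ≃ₐ[K] MvPolynomial {t // t ≠ i} K[X] :=
  (renameEquiv K (Equiv.optionSubtypeNe i).symm).trans (optionEquivRight K {t // t ≠ i})

@[simp]
theorem splitVariable_X_self : splitVariable K i (MvPolynomial.X i) = Polynomial.X := by
  simp [splitVariable, optionEquivLeft_X_none]

@[simp]
theorem splitVariable_X_of_ne (t : {t // t ≠ i}) :
    splitVariable K i (MvPolynomial.X t) = Polynomial.C (MvPolynomial.X t) := by
  simp [splitVariable, optionEquivLeft_X_some, t.2]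

@[simp]
theorem splitVariable_rename (p : MvPolynomial {t // t ≠ i} K) :
    splitVariable K i (rename Subtype.val p) = Polynomial.C p := by
  have halg : (splitVariable K i).toAlgHom.comp (rename Subtype.val) =
      Polynomial.CAlgHom := by
    ext t
    simp
  exact DFunLike.congr_fun halg p

@[simp]
theorem variableToCoeff_X_self :
    variableToCoeff K i (MvPolynomial.X i) = MvPolynomial.C Polynomial.X := by
  simp [variableToCoeff]

theorem variableToCoeff_aeval (p : K[X]) :
    variableToCoeff K i (Polynomial.aeval (MvPolynomial.X i) p) = MvPolynomial.C p := by
  have halg : (variableToCoeff K i).toAlgHom.comp (Polynomial.aeval (MvPolynomial.X i)) =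
      (Algebra.ofId K[X] _).restrictScalars K := by
    ext
    simp
  exact DFunLike.congr_fun halg p

end VariableSplitting

open Polynomial in
theorem HasPrincipalMinors.exists_isSmithForm_of_X_sub_mul {K : Type*} [Field K] {σ : Type*}
    [Finite σ] {i : σ} (j : {t // t ≠ i})
    (f : MvPolynomial {t // t ≠ i} K) (p : K[X])
    (hne : (MvPolynomial.X i - rename Subtype.val f) *
      Polynomial.aeval (MvPolynomial.X (j : σ)) p ≠ 0)
    {l m : ℕ} {F : Matrix (Fin l) (Fin m) (MvPolynomial σ K)}
    (hF : HasPrincipalMinors ((MvPolynomial.X i - rename Subtype.val f) *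
      Polynomial.aeval (MvPolynomial.X (j : σ)) p) F) :
    ∃ Φ, IsSmithForm F Φ := by
  classical
  let shift := Polynomial.algEquivAevalXAddC (variableToCoeff K j f)
  let e := (splitVariable K i).toRingEquiv.trans
    ((Polynomial.mapEquiv (variableToCoeff K j).toRingEquiv).trans shift.toRingEquiv)
  have hp : p ≠ 0 := by
    rintro rfl
    simp at hne
  have heval : splitVariable K i (Polynomial.aeval (MvPolynomial.X (j : σ)) p) =
      Polynomial.C (Polynomial.aeval (MvPolynomial.X j) p) := by
    rw [← splitVariable_rename, ← Polynomial.aeval_algHom_apply, ← Polynomial.aeval_algHom_apply,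
      ← Polynomial.aeval_algHom_apply, rename_X]
  have he : e ((MvPolynomial.X i - rename Subtype.val f) *
      Polynomial.aeval (MvPolynomial.X (j : σ)) p) =
      Polynomial.X * Polynomial.C (MvPolynomial.C p) := by
    simp [e, shift, heval, variableToCoeff_aeval, Polynomial.algEquivAevalXAddC]
  refine HasPrincipalMinors.exists_isSmithForm_of_ringEquiv e (fun G hG => ?_) hF
  rw [he] at hG
  have hover := smithOverConstants_mvPolynomial {t : {t // t ≠ i} // t ≠ j} K
  have hoverX := smithOverConstants_mvPolynomial (Option {t : {t // t ≠ i} // t ≠ j}) K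
  exact hover.exists_isSmithForm_of_X_mul_C
    (hoverX.of_algEquiv (optionEquivLeft K[X] {t : {t // t ≠ i} // t ≠ j}))
    (MvPolynomial.C_ne_zero.2 hp)
    (fun a ha => ((MvPolynomial.dvd_C_iff_exists hp).1 ha).imp fun _ => And.right) hG

theorem statement4_general {K : Type*} [Field K] {σ : Type*} [Finite σ] {i j : σ} (hij : i ≠ j)
    {l m r : ℕ} {F : Matrix (Fin l) (Fin m) (MvPolynomial σ K)} (hrank : HasRank F r)
    {f h : MvPolynomial σ K} (hf : f ∈ MvPolynomial.supported K {t | t ≠ i})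
    (hh : h ∈ MvPolynomial.supported K {j})
    (hd : IsGcdMinors F r ((MvPolynomial.X i - f) * h)) :
    SmithEquivAt F r ↔ ∀ k : ℕ, 1 ≤ k → k ≤ r → JkUnit F k := by
  classical
  have hne := hrank.gcd_ne_zero hd
  obtain ⟨f, rfl⟩ : ∃ g, rename Subtype.val g = f := by
    rwa [supported_eq_range_rename] at hf
  obtain ⟨p, rfl⟩ : ∃ p, Polynomial.aeval (MvPolynomial.X j) p = h := by
    rwa [supported, Set.image_singleton, Algebra.adjoin_singleton_eq_range_aeval] at hh
  exact smithEquivAt_iff_forall_jkUnit hrank hd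
    (HasPrincipalMinors.exists_isSmithForm_of_X_sub_mul ⟨j, hij.symm⟩ f p hne)

theorem statement4 {K : Type*} [Field K] (n : ℕ) (hn : 2 ≤ n) (l m r : ℕ) (hlm : l < m)
    (j : ℕ) (hj2 : 2 ≤ j) (hjn : j ≤ n)
    (F : Matrix (Fin l) (Fin m) (MvPolynomial (Fin n) K))
    (hrank : HasRank F r)
    (f h : MvPolynomial (Fin n) K)
    (hf : f ∈ MvPolynomial.supported K {t : Fin n | (t : ℕ) ≠ 0})
    (hh : h ∈ MvPolynomial.supported K {(⟨j - 1, by omega⟩ : Fin n)})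
    (hd : IsGcdMinors F r ((MvPolynomial.X (⟨0, by omega⟩ : Fin n) - f) * h)) :
    SmithEquivAt F r ↔ ∀ k : ℕ, 1 ≤ k → k ≤ r → JkUnit F k :=
  statement4_general (by simp only [ne_eq, Fin.mk.injEq]; omega) hrank
    (by simpa only [ne_eq, Fin.ext_iff] using hf) hh hd
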